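/- arXiv:2001.04411 — 2 statements merged into one kernel-verified Lean document; each statement's English description precedes it below -/
import Mathlib

section
/- Let (W,S) be a Coxeter system, I, J, K ⊆ S pairwise disjoint and pairwise disconnected, σ : W_I → W_J, x ↦ x*, a Coxeter group isomorphism, W_{I,J} = {x x* : x ∈ W_I}, and W(I,J,K) = W^{J∪K} the set of minimal-length representatives of cosets of W_{J∪K}. Define, for w, w' ∈ W(I,J,K), w' ≤_O w iff there exists u ∈ w' W_K W_{I,J} with u ≤ w (Bruhat order). Then ≤_O is a partial order on W(I,J,K). -/
section BruhatSetup

variable {B : Type*} {W : Type*} [Group W] {M : CoxeterMatrix B}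

/-- Strong Bruhat order: `u ≤ v` iff every reduced word for `v` has a sublist
that is a reduced word for `u`. -/
def BruhatLE (cs : CoxeterSystem M W) (u v : W) : Prop :=
  ∀ ω : List B, cs.IsReduced ω → cs.wordProd ω = v →
    ∃ ω' : List B, List.Sublist ω' ω ∧ cs.IsReduced ω' ∧ cs.wordProd ω' = u

/-- Strict strong Bruhat order. -/
def BruhatLT (cs : CoxeterSystem M W) (u v : W) : Prop :=
  BruhatLE cs u v ∧ u ≠ v

/-- The standard parabolic subgroup `W_L` generated by the simple reflections in `L`. -/
def parab (cs : CoxeterSystem M W) (L : Set B) : Subgroup W :=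
  Subgroup.closure (cs.simple '' L)

/-- The set `W^L` of minimal length coset representatives for `W / W_L`. -/
def minReps (cs : CoxeterSystem M W) (L : Set B) : Set W :=
  {w : W | ∀ i ∈ L, cs.length w < cs.length (w * cs.simple i)}

/-- Right weak order: `v ≤_R w` iff `ℓ(w) = ℓ(w v⁻¹) + ℓ(v)`. -/
def leR (cs : CoxeterSystem M W) (v w : W) : Prop :=
  cs.length w = cs.length (w * v⁻¹) + cs.length v

/-- The setup of the order `≤_O`: `I`, `J`, `K` are pairwise disjoint and pairwise
disconnected subsets of the simple system (so that `W_{I∪J∪K} = W_I × W_J × W_K`),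
and `σ : x ↦ x*` restricts to an isomorphism of Coxeter groups `W_I → W_J`
(a bijective group homomorphism sending simple reflections to simple reflections). -/
structure GoodSetup (cs : CoxeterSystem M W) (I J K : Set B) (σ : W → W) : Prop where
  disjIJ : Disjoint I J
  disjIK : Disjoint I K
  disjJK : Disjoint J K
  commIJ : ∀ i ∈ I, ∀ j ∈ J, Commute (cs.simple i) (cs.simple j)
  commIK : ∀ i ∈ I, ∀ k ∈ K, Commute (cs.simple i) (cs.simple k)
  commJK : ∀ j ∈ J, ∀ k ∈ K, Commute (cs.simple j) (cs.simple k)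
  directProd : ∀ x ∈ parab cs I, ∀ y ∈ parab cs J, ∀ z ∈ parab cs K,
    x * y * z = 1 → x = 1 ∧ y = 1 ∧ z = 1
  mulSigma : ∀ x ∈ parab cs I, ∀ y ∈ parab cs I, σ (x * y) = σ x * σ y
  bijSigma : Set.BijOn σ (parab cs I : Set W) (parab cs J : Set W)
  simpleSigma : ∀ i ∈ I, ∃ j ∈ J, σ (cs.simple i) = cs.simple j

/-- Membership in the coset `[w] = w · W_K · W_{I,J}` where `W_{I,J} = {x x* : x ∈ W_I}`. -/
def inCoset (cs : CoxeterSystem M W) (I K : Set B) (σ : W → W) (w u : W) : Prop :=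
  ∃ a ∈ parab cs K, ∃ x ∈ parab cs I, u = w * a * (x * σ x)

/-- The relation `≤_O`: `w' ≤_O w` iff some `u ∈ [w']` satisfies `u ≤ w` in Bruhat order. -/
def leO (cs : CoxeterSystem M W) (I K : Set B) (σ : W → W) (w' w : W) : Prop :=
  ∃ u, inCoset cs I K σ w' u ∧ BruhatLE cs u w

/-- The strict relation associated to `≤_O`. -/
def ltO (cs : CoxeterSystem M W) (I K : Set B) (σ : W → W) (w' w : W) : Prop :=
  leO cs I K σ w' w ∧ w' ≠ w

/-- `Min(w)`: the elements of the coset `[w]` of length `ℓ(w)`. -/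
def MinC (cs : CoxeterSystem M W) (I K : Set B) (σ : W → W) (w : W) : Set W :=
  {u : W | inCoset cs I K σ w u ∧ cs.length u = cs.length w}

/-- The set `M` of all elements having minimal length in their coset mod `W_K W_{I,J}`. -/
def Mset (cs : CoxeterSystem M W) (I J K : Set B) (σ : W → W) : Set W :=
  {u : W | ∃ w ∈ minReps cs (J ∪ K), u ∈ MinC cs I K σ w}

open Classical in
/-- The generator of the parity representation on `W × ZMod 2`. -/
noncomputable def parGen (cs : CoxeterSystem M W) (i : B) : Function.End (W × ZMod 2) :=
  fun p => (cs.simple i * p.1 * cs.simple i, p.2 + if p.1 = cs.simple i then 1 else 0)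

open Classical in
theorem parGen_pow (cs : CoxeterSystem M W) (i j : B) (n : ℕ) (w : W) (e : ZMod 2) :
    ((parGen cs i * parGen cs j) ^ n) (w, e) =
      ((cs.simple i * cs.simple j) ^ n * w * ((cs.simple i * cs.simple j) ^ n)⁻¹,
        e + ∑ k ∈ Finset.range (2 * n),
          if w = cs.simple j * (cs.simple i * cs.simple j) ^ k then 1 else 0) := by
  set r := cs.simple i * cs.simple j with hr
  have hconj : ∀ k : ℕ, cs.simple j * r ^ k = (r ^ k)⁻¹ * cs.simple j := by
    intro k
    have h1 : SemiconjBy (cs.simple j) r r⁻¹ := by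
      simp [SemiconjBy, hr, mul_assoc]
    have h2 := h1.pow_right k
    rw [inv_pow] at h2
    exact h2
  induction n with
  | zero => simp; rfl
  | succ n ih =>
    rw [pow_succ']
    change (parGen cs i * parGen cs j) (((parGen cs i * parGen cs j) ^ n) (w, e)) = _
    rw [ih]
    change parGen cs i (parGen cs j _) = _
    simp only [parGen]
    have e1 : (r ^ n * w * (r ^ n)⁻¹ = cs.simple j) ↔ w = cs.simple j * r ^ (2 * n) := by
      have h3 : cs.simple j * r ^ (2 * n) = (r ^ n)⁻¹ * cs.simple j * r ^ n := by
        rw [two_mul, pow_add, ← mul_assoc, hconj]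
      rw [h3]
      constructor
      · intro h; rw [← h]; group
      · intro h; rw [h]; group
    have e2 : (cs.simple j * (r ^ n * w * (r ^ n)⁻¹) * cs.simple j = cs.simple i) ↔
        w = cs.simple j * r ^ (2 * n + 1) := by
      have h3 : cs.simple j * r ^ (2 * n + 1) =
          (r ^ n)⁻¹ * (cs.simple j * cs.simple i * cs.simple j) * r ^ n := by
        rw [show 2 * n + 1 = n + 1 + n by ring, pow_add, ← mul_assoc, pow_succ, ← mul_assoc, hconj,
          hr]
        simp only [mul_assoc]
      rw [h3]
      constructor
      · intro h; rw [← h]; simp [mul_assoc]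
      · intro h; rw [h]; simp [mul_assoc]
    simp only [e1, e2]
    rw [show 2 * (n + 1) = 2 * n + 1 + 1 by ring, Finset.sum_range_succ, Finset.sum_range_succ]
    refine Prod.ext ?_ ?_
    · simp only [pow_succ', mul_inv_rev, hr, cs.inv_simple, mul_assoc]
    · simp only [add_assoc]

theorem parGen_liftable (cs : CoxeterSystem M W) : M.IsLiftable (parGen cs) := by
  classical
  intro i j
  funext p
  obtain ⟨w, e⟩ := p
  rw [parGen_pow, cs.simple_mul_simple_pow]
  change _ = (w, e)
  rw [two_mul, Finset.sum_range_add]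
  simp only [pow_add, cs.simple_mul_simple_pow, one_mul, inv_one, mul_one]
  rw [CharTwo.add_self_eq_zero, add_zero]

/-- The parity representation. -/
noncomputable def parRep (cs : CoxeterSystem M W) : W →* Function.End (W × ZMod 2) :=
  cs.lift ⟨parGen cs, parGen_liftable cs⟩

theorem parRep_simple (cs : CoxeterSystem M W) (i : B) : parRep cs (cs.simple i) = parGen cs i :=
  cs.lift_apply_simple _ _

theorem parRep_mul_apply (cs : CoxeterSystem M W) (u v : W) (p : W × ZMod 2) :
    parRep cs (u * v) p = parRep cs u (parRep cs v p) := by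
  rw [map_mul]; rfl

open Classical in
theorem parRep_word (cs : CoxeterSystem M W) (ω : List B) (t : W) (e : ZMod 2) :
    parRep cs (cs.wordProd ω) (t, e) =
      (cs.wordProd ω * t * (cs.wordProd ω)⁻¹, e + ((cs.rightInvSeq ω).count t : ZMod 2)) := by
  induction ω with
  | nil => simp [CoxeterSystem.rightInvSeq]; rfl
  | cons i ω ih =>
    rw [cs.wordProd_cons, parRep_mul_apply, ih, parRep_simple]
    simp only [parGen, CoxeterSystem.rightInvSeq, List.count_cons]
    have e1 : (cs.wordProd ω * t * (cs.wordProd ω)⁻¹ = cs.simple i) ↔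
        ((cs.wordProd ω)⁻¹ * cs.simple i * cs.wordProd ω = t) := by
      constructor
      · intro h; rw [← h]; group
      · intro h; rw [← h]; group
    refine Prod.ext ?_ ?_
    · simp [mul_assoc]
    · simp only [e1, beq_iff_eq]
      push_cast
      rw [add_assoc]

theorem parRep_shift (cs : CoxeterSystem M W) (w t : W) (e : ZMod 2) :
    parRep cs w (t, e) = ((parRep cs w (t, 0)).1, e + (parRep cs w (t, 0)).2) := by
  obtain ⟨ω, rfl⟩ := cs.wordProd_surjective w
  simp [parRep_word]

theorem parRep_refl (cs : CoxeterSystem M W) {t : W} (ht : cs.IsReflection t) (e : ZMod 2) :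
    parRep cs t (t, e) = (t, e + 1) := by
  obtain ⟨u, i, rfl⟩ := ht
  have key : ∀ d : ZMod 2, ∃ c : ZMod 2,
      ∀ e, parRep cs u (cs.simple i, e) = (u * cs.simple i * u⁻¹, e + c) := by
    intro d
    obtain ⟨ω, rfl⟩ := cs.wordProd_surjective u
    classical
    exact ⟨_, fun e => parRep_word cs ω _ e⟩
  obtain ⟨c, hc⟩ := key 0
  have hinv : parRep cs u⁻¹ (u * cs.simple i * u⁻¹, e) = (cs.simple i, e - c) := by
    have := hc (e - c)
    rw [sub_add_cancel] at this
    rw [← this, ← parRep_mul_apply]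
    simp
    rfl
  rw [parRep_mul_apply, parRep_mul_apply, hinv, parRep_simple]
  have : parGen cs i (cs.simple i, e - c) = (cs.simple i, e - c + 1) := by
    simp [parGen]
  rw [this, hc]
  congr 1
  ring

/-- Strong exchange: any word. -/
theorem mem_ris_of_inversion (cs : CoxeterSystem M W) (ω : List B) {t : W}
    (ht : cs.IsReflection t) (hl : cs.length (cs.wordProd ω * t) < cs.length (cs.wordProd ω)) :
    t ∈ cs.rightInvSeq ω := by
  classical
  by_contra hn
  have h0 : (cs.rightInvSeq ω).count t = 0 := List.count_eq_zero.2 hn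
  obtain ⟨ω', hω', hw⟩ := cs.exists_isReduced (cs.wordProd ω * t)
  have h1 := parRep_word cs ω' t 0
  rw [← hw, parRep_mul_apply, parRep_refl cs ht, parRep_word, h0] at h1
  have h2 : ((cs.rightInvSeq ω').count t : ZMod 2) = 1 := by
    have := congrArg Prod.snd h1
    simpa using this.symm
  have h3 : t ∈ cs.rightInvSeq ω' := by
    by_contra hn'
    rw [List.count_eq_zero.2 hn'] at h2
    simp at h2
  have h4 := (cs.isRightInversion_of_mem_rightInvSeq hω' h3).2
  rw [← hw, mul_assoc, ht.mul_self, mul_one] at h4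
  omega

theorem strong_exchange (cs : CoxeterSystem M W) (ω : List B) {t : W}
    (ht : cs.IsReflection t) (hl : cs.length (cs.wordProd ω * t) < cs.length (cs.wordProd ω)) :
    ∃ k < ω.length, cs.wordProd ω * t = cs.wordProd (ω.eraseIdx k) := by
  obtain ⟨k, hk, rfl⟩ := List.getElem_of_mem (mem_ris_of_inversion cs ω ht hl)
  refine ⟨k, by simpa using hk, ?_⟩
  rw [← cs.wordProd_mul_getD_rightInvSeq, List.getD_eq_getElem _ _ hk]

/-- Exchange for simple reflections -/
theorem simple_exchange (cs : CoxeterSystem M W) (ω : List B) (i : B)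
    (hl : cs.length (cs.wordProd ω * cs.simple i) < cs.length (cs.wordProd ω)) :
    ∃ k < ω.length, cs.wordProd ω * cs.simple i = cs.wordProd (ω.eraseIdx k) :=
  strong_exchange cs ω (cs.isReflection_simple i) hl

theorem isReduced_of_le (cs : CoxeterSystem M W) (ω : List B)
    (h : ω.length ≤ cs.length (cs.wordProd ω)) : cs.IsReduced ω :=
  le_antisymm (cs.length_wordProd_le ω) h

theorem wordProd_snoc (cs : CoxeterSystem M W) (ω : List B) (i : B) :
    cs.wordProd (ω ++ [i]) = cs.wordProd ω * cs.simple i := by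
  simp [cs.wordProd_append]

theorem reduced_init (cs : CoxeterSystem M W) {ω : List B} {i : B}
    (h : cs.IsReduced (ω ++ [i])) : cs.IsReduced ω := by
  have := h.take ω.length
  simpa using this

theorem reduced_snoc_lt (cs : CoxeterSystem M W) {ω : List B} {i : B}
    (h : cs.IsReduced (ω ++ [i])) :
    cs.length (cs.wordProd ω) < cs.length (cs.wordProd ω * cs.simple i) := by
  have h1 := (reduced_init cs h).eq
  have h2 := h.eq
  rw [wordProd_snoc] at h2
  simp at h2
  omega

theorem reduced_snoc (cs : CoxeterSystem M W) {ω : List B} {i : B} (hω : cs.IsReduced ω)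
    (h : cs.length (cs.wordProd ω) < cs.length (cs.wordProd ω * cs.simple i)) :
    cs.IsReduced (ω ++ [i]) := by
  apply isReduced_of_le
  rw [wordProd_snoc, List.length_append, List.length_singleton, ← hω.eq]
  exact h

theorem lt_or_lt (cs : CoxeterSystem M W) (w : W) (i : B) :
    cs.length w < cs.length (w * cs.simple i) ∨ cs.length (w * cs.simple i) < cs.length w :=
  (cs.length_mul_simple_ne w i).lt_or_gt.symm

/-- Exchange on reduced words. -/
theorem reduced_exchange (cs : CoxeterSystem M W) {ω : List B} (hω : cs.IsReduced ω) {i : B}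
    (hl : cs.length (cs.wordProd ω * cs.simple i) < cs.length (cs.wordProd ω)) :
    ∃ ω' : List B, ω'.Sublist ω ∧ cs.IsReduced ω' ∧ cs.wordProd ω' = cs.wordProd ω * cs.simple i := by
  obtain ⟨k, hk, h⟩ := simple_exchange cs ω i hl
  refine ⟨ω.eraseIdx k, List.eraseIdx_sublist _ _, ?_, h.symm⟩
  apply isReduced_of_le
  rw [← h, List.length_eraseIdx_of_lt hk, ← hω.eq]
  rcases cs.length_mul_simple (cs.wordProd ω) i with h | h <;> omega

theorem deletion (cs : CoxeterSystem M W) (ω : List B) :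
    ∃ ω' : List B, ω'.Sublist ω ∧ cs.IsReduced ω' ∧ cs.wordProd ω' = cs.wordProd ω := by
  induction ω using List.reverseRecOn with
  | nil => exact ⟨[], List.Sublist.refl _, isReduced_of_le cs _ (by simp), rfl⟩
  | append_singleton ω i ih =>
    obtain ⟨ω', hs, hr, hp⟩ := ih
    rcases lt_or_lt cs (cs.wordProd ω') i with h | h
    · exact ⟨ω' ++ [i], hs.append (List.Sublist.refl _), reduced_snoc cs hr h, by
        rw [wordProd_snoc, wordProd_snoc, hp]⟩
    · obtain ⟨θ, hs', hr', hp'⟩ := reduced_exchange cs hr h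
      exact ⟨θ, (hs'.trans hs).trans (List.sublist_append_left _ _), hr', by
        rw [hp', wordProd_snoc, hp]⟩

/-- One step of the reflection chain order. -/
def chainStep (cs : CoxeterSystem M W) (u v : W) : Prop :=
  ∃ t, cs.IsReflection t ∧ v = u * t ∧ cs.length u < cs.length v

theorem bruhat_of_chain (cs : CoxeterSystem M W) {u v : W}
    (h : Relation.ReflTransGen (chainStep cs) u v) : BruhatLE cs u v := by
  have key : ∀ ω : List B, cs.wordProd ω = v → ∃ ω' : List B, ω'.Sublist ω ∧ cs.wordProd ω' = u := by
    induction h with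
    | refl => exact fun ω h => ⟨ω, List.Sublist.refl _, h⟩
    | @tail b c _ hs ih =>
      intro ω hω
      obtain ⟨t, ht, rfl, hl⟩ := hs
      have hb : cs.wordProd ω * t = b := by rw [hω, mul_assoc, ht.mul_self, mul_one]
      obtain ⟨k, hk, he⟩ := strong_exchange cs ω ht (by rw [hb, hω]; exact hl)
      obtain ⟨ω', hs', hp⟩ := ih (ω.eraseIdx k) (by rw [← he, hb])
      exact ⟨ω', hs'.trans (List.eraseIdx_sublist _ _), hp⟩
  intro ω _ hω
  obtain ⟨ω', hs, hp⟩ := key ω hω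
  obtain ⟨θ, h1, h2, h3⟩ := deletion cs ω'
  exact ⟨θ, h1.trans hs, h2, h3.trans hp⟩

theorem chain_mul (cs : CoxeterSystem M W) {u v : W} (i : B)
    (h : Relation.ReflTransGen (chainStep cs) u v) :
    Relation.ReflTransGen (chainStep cs) (u * cs.simple i) v ∨
    Relation.ReflTransGen (chainStep cs) (u * cs.simple i) (v * cs.simple i) := by
  induction h using Relation.ReflTransGen.head_induction_on with
  | refl => exact Or.inr Relation.ReflTransGen.refl
  | head hs hc ih =>
    rename_i u u1
    obtain ⟨t, ht, rfl, hl⟩ := hs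
    by_cases hlt : cs.length (u * cs.simple i) < cs.length (u * t * cs.simple i)
    · have hstep : chainStep cs (u * cs.simple i) (u * t * cs.simple i) := by
        refine ⟨cs.simple i * t * (cs.simple i)⁻¹, ht.conj _, ?_, hlt⟩
        simp [mul_assoc]
      exact ih.imp (Relation.ReflTransGen.head hstep) (Relation.ReflTransGen.head hstep)
    · have h1 := cs.length_mul_simple u i
      have h2 := cs.length_mul_simple (u * t) i
      have hne : cs.length (u * t * cs.simple i) ≠ cs.length (u * cs.simple i) := by
        have := (ht.conj (cs.simple i)).length_mul_left_ne (u * cs.simple i)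
        have e : u * cs.simple i * (cs.simple i * t * (cs.simple i)⁻¹) = u * t * cs.simple i := by
          simp [mul_assoc]
        rwa [e] at this
      obtain ⟨ω, hω, hp⟩ := cs.exists_isReduced (u * t * cs.simple i)
      have hp' : cs.wordProd (ω ++ [i]) = u * t := by
        rw [wordProd_snoc, ← hp]; simp
      have hu : u * t * t = u := by rw [mul_assoc, ht.mul_self, mul_one]
      obtain ⟨k, hk, he⟩ := strong_exchange cs (ω ++ [i]) ht (by rw [hp', hu]; exact hl)
      rw [hp', hu] at he
      rw [List.length_append, List.length_singleton] at hk
      by_cases hk' : k < ω.length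
      · exfalso
        rw [List.eraseIdx_append_of_lt_length hk', wordProd_snoc] at he
        have h3 : cs.length (u * cs.simple i) ≤ ω.length - 1 := by
          rw [he, cs.simple_mul_simple_cancel_right, ← List.length_eraseIdx_of_lt hk']
          exact cs.length_wordProd_le _
        have h4 := hω.eq
        rw [← hp] at h4
        omega
      · have hk2 : k = ω.length := by omega
        subst hk2
        rw [List.eraseIdx_append_of_length_le le_rfl] at he
        simp at he
        left
        have : u * cs.simple i = u * t := by
          conv_lhs => rw [he, ← hp]
          simp
        rw [this]
        exact hc

theorem chain_of_sublist (cs : CoxeterSystem M W) (ω : List B) :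
    ∀ ω' : List B, cs.IsReduced ω → ω'.Sublist ω →
      Relation.ReflTransGen (chainStep cs) (cs.wordProd ω') (cs.wordProd ω) := by
  induction ω using List.reverseRecOn with
  | nil =>
    intro ω' _ hs
    rw [List.sublist_nil.1 hs]
  | append_singleton ω i ih =>
    intro ω' hr hs
    have hr0 := reduced_init cs hr
    have hstep : chainStep cs (cs.wordProd ω) (cs.wordProd (ω ++ [i])) := by
      refine ⟨cs.simple i, cs.isReflection_simple i, wordProd_snoc cs ω i, ?_⟩
      rw [wordProd_snoc]
      exact reduced_snoc_lt cs hr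
    obtain ⟨l1, l2, rfl, h1, h2⟩ := List.sublist_append_iff.1 hs
    rcases List.sublist_singleton.1 h2 with rfl | rfl
    · rw [List.append_nil]
      exact (ih l1 hr0 h1).tail hstep
    · rw [wordProd_snoc]
      rcases chain_mul cs i (ih l1 hr0 h1) with h | h
      · exact h.tail hstep
      · rwa [wordProd_snoc]

theorem bruhat_iff_chain (cs : CoxeterSystem M W) {u v : W} :
    BruhatLE cs u v ↔ Relation.ReflTransGen (chainStep cs) u v := by
  refine ⟨fun h => ?_, bruhat_of_chain cs⟩
  obtain ⟨ω, hω, hv⟩ := cs.exists_isReduced v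
  obtain ⟨ω', hs, _, rfl⟩ := h ω hω hv.symm
  rw [hv]
  exact chain_of_sublist cs ω ω' hω hs

theorem bruhat_refl (cs : CoxeterSystem M W) (u : W) : BruhatLE cs u u :=
  fun ω hr hp => ⟨ω, List.Sublist.refl _, hr, hp⟩

theorem bruhat_trans (cs : CoxeterSystem M W) {u v w : W} (h1 : BruhatLE cs u v)
    (h2 : BruhatLE cs v w) : BruhatLE cs u w := by
  intro ω hr hp
  obtain ⟨ω', hs, hr', hp'⟩ := h2 ω hr hp
  obtain ⟨θ, hs2, hr2, hp2⟩ := h1 ω' hr' hp'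
  exact ⟨θ, hs2.trans hs, hr2, hp2⟩

theorem bruhat_length (cs : CoxeterSystem M W) {u v : W} (h : BruhatLE cs u v) :
    cs.length u ≤ cs.length v := by
  obtain ⟨ω, hω, rfl⟩ := cs.exists_isReduced v
  obtain ⟨ω', hs, hr, rfl⟩ := h ω hω rfl
  rw [hω.eq, hr.eq]
  exact hs.length_le

theorem bruhat_eq (cs : CoxeterSystem M W) {u v : W} (h : BruhatLE cs u v)
    (hl : cs.length v ≤ cs.length u) : u = v := by
  obtain ⟨ω, hω, rfl⟩ := cs.exists_isReduced v
  obtain ⟨ω', hs, hr, rfl⟩ := h ω hω rfl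
  rw [hω.eq, hr.eq] at hl
  rw [hs.eq_of_length_le hl]

theorem bruhat_up (cs : CoxeterSystem M W) {v : W} {i : B}
    (h : cs.length v < cs.length (v * cs.simple i)) : BruhatLE cs v (v * cs.simple i) :=
  bruhat_of_chain cs (Relation.ReflTransGen.single ⟨_, cs.isReflection_simple i, rfl, h⟩)

theorem bruhat_mul_up (cs : CoxeterSystem M W) {u v : W} {i : B} (huv : BruhatLE cs u v)
    (h : cs.length v < cs.length (v * cs.simple i)) :
    BruhatLE cs (u * cs.simple i) (v * cs.simple i) := by
  rcases chain_mul cs i ((bruhat_iff_chain cs).1 huv) with h' | h'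
  · exact bruhat_trans cs (bruhat_of_chain cs h') (bruhat_up cs h)
  · exact bruhat_of_chain cs h'

theorem bruhat_down (cs : CoxeterSystem M W) {u v : W} {i : B} (huv : BruhatLE cs u v)
    (hv : cs.length (v * cs.simple i) < cs.length v) :
    (cs.length u < cs.length (u * cs.simple i) → BruhatLE cs u (v * cs.simple i)) ∧
    (cs.length (u * cs.simple i) < cs.length u →
      BruhatLE cs (u * cs.simple i) (v * cs.simple i)) := by
  have key : ∀ ω, cs.IsReduced ω → cs.wordProd ω = v * cs.simple i →
      ∃ ω' : List B, cs.IsReduced ω' ∧ ((ω'.Sublist ω ∧ cs.wordProd ω' = u) ∨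
        (ω'.Sublist ω ∧ cs.wordProd ω' * cs.simple i = u ∧ cs.IsReduced (ω' ++ [i]))) := by
    intro ω hr hp
    have hp' : cs.wordProd (ω ++ [i]) = v := by rw [wordProd_snoc, hp]; simp
    have hr' : cs.IsReduced (ω ++ [i]) := reduced_snoc cs hr (by rw [hp]; simpa using hv)
    obtain ⟨ω', hs, hr1, hp1⟩ := huv _ hr' hp'
    obtain ⟨l1, l2, rfl, h1, h2⟩ := List.sublist_append_iff.1 hs
    rcases List.sublist_singleton.1 h2 with rfl | rfl
    · rw [List.append_nil] at hr1 hp1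
      exact ⟨l1, hr1, Or.inl ⟨h1, hp1⟩⟩
    · exact ⟨l1, reduced_init cs hr1, Or.inr ⟨h1, by rw [← hp1, wordProd_snoc], hr1⟩⟩
  constructor
  · intro hu ω hr hp
    obtain ⟨ω', hr', ⟨hs, hp'⟩ | ⟨hs, hp', hr2⟩⟩ := key ω hr hp
    · exact ⟨ω', hs, hr', hp'⟩
    · exfalso
      have := reduced_snoc_lt cs hr2
      rw [← hp', cs.simple_mul_simple_cancel_right] at hu
      omega
  · intro hu ω hr hp
    obtain ⟨ω', hr', ⟨hs, hp'⟩ | ⟨hs, hp', hr2⟩⟩ := key ω hr hp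
    · subst hp'
      obtain ⟨θ, h1, h2, h3⟩ := reduced_exchange cs hr' hu
      exact ⟨θ, h1.trans hs, h2, h3⟩
    · exact ⟨ω', hs, hr', by rw [← hp']; simp⟩

theorem word_mem_parab (cs : CoxeterSystem M W) {L : Set B} (ω : List B) (h : ∀ i ∈ ω, i ∈ L) :
    cs.wordProd ω ∈ parab cs L := by
  induction ω with
  | nil => simpa using one_mem _
  | cons i ω ih =>
    rw [cs.wordProd_cons]
    exact mul_mem (Subgroup.subset_closure ⟨i, h i (by simp), rfl⟩)
      (ih fun j hj => h j (by simp [hj]))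

theorem simple_mem_parab (cs : CoxeterSystem M W) {L : Set B} {i : B} (h : i ∈ L) :
    cs.simple i ∈ parab cs L := Subgroup.subset_closure ⟨i, h, rfl⟩

theorem parab_word (cs : CoxeterSystem M W) {L : Set B} {x : W} (hx : x ∈ parab cs L) :
    ∃ ω : List B, (∀ i ∈ ω, i ∈ L) ∧ cs.IsReduced ω ∧ cs.wordProd ω = x := by
  have h : ∃ ω : List B, (∀ i ∈ ω, i ∈ L) ∧ cs.wordProd ω = x := by
    unfold parab at hx
    induction hx using Subgroup.closure_induction with
    | mem x hx =>
      obtain ⟨i, hi, rfl⟩ := hx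
      exact ⟨[i], by simpa using hi, by simp⟩
    | one => exact ⟨[], by simp, by simp⟩
    | mul x y _ _ ihx ihy =>
      obtain ⟨a, ha, rfl⟩ := ihx
      obtain ⟨b, hb, rfl⟩ := ihy
      refine ⟨a ++ b, ?_, cs.wordProd_append a b⟩
      intro i hi
      rcases List.mem_append.1 hi with h | h
      · exact ha i h
      · exact hb i h
    | inv x _ ih =>
      obtain ⟨a, ha, rfl⟩ := ih
      exact ⟨a.reverse, by simpa using ha, cs.wordProd_reverse a⟩
  obtain ⟨ω, hω, rfl⟩ := h
  obtain ⟨ω', hs, hr, hp⟩ := deletion cs ω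
  exact ⟨ω', fun i hi => hω i (hs.subset hi), hr, hp⟩

theorem length_add_of_min (cs : CoxeterSystem M W) {L : Set B} {m : W}
    (hm : ∀ x ∈ parab cs L, cs.length m ≤ cs.length (m * x)) (ω : List B) :
    (∀ i ∈ ω, i ∈ L) → cs.IsReduced ω →
      cs.length (m * cs.wordProd ω) = cs.length m + ω.length := by
  induction ω using List.reverseRecOn with
  | nil => intros; simp
  | append_singleton ω i ih =>
    intro hL hr
    have hL' : ∀ j ∈ ω, j ∈ L := fun j hj => hL j (by simp [hj])
    have hi : i ∈ L := hL i (by simp)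
    have hr0 := reduced_init cs hr
    have h1 := ih hL' hr0
    rw [wordProd_snoc, ← mul_assoc, List.length_append, List.length_singleton]
    rcases cs.length_mul_simple (m * cs.wordProd ω) i with h2 | h2
    · omega
    · exfalso
      obtain ⟨μ, hμ, hmμ⟩ := cs.exists_isReduced m
      have hp : cs.wordProd (μ ++ ω) = m * cs.wordProd ω := by rw [cs.wordProd_append, ← hmμ]
      obtain ⟨k, hk, he⟩ := simple_exchange cs (μ ++ ω) i (by rw [hp]; omega)
      rw [hp] at he
      by_cases hk' : k < μ.length
      · rw [List.eraseIdx_append_of_lt_length hk', cs.wordProd_append] at he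
        have hw := word_mem_parab cs ω hL'
        have h3 := hm (cs.wordProd ω * cs.simple i * (cs.wordProd ω)⁻¹)
          (mul_mem (mul_mem hw (simple_mem_parab cs hi)) (inv_mem hw))
        have e : m * (cs.wordProd ω * cs.simple i * (cs.wordProd ω)⁻¹) =
            cs.wordProd (μ.eraseIdx k) := by
          rw [← mul_assoc, ← mul_assoc, he]; group
        have h4 := cs.length_wordProd_le (μ.eraseIdx k)
        have h5 := hμ.eq
        rw [← hmμ] at h5
        rw [e] at h3
        rw [List.length_eraseIdx_of_lt hk'] at h4
        omega
      · rw [List.eraseIdx_append_of_length_le (by omega), cs.wordProd_append, ← hmμ, mul_assoc] at he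
        have he' := mul_left_cancel he
        have h4 := cs.length_wordProd_le (ω.eraseIdx (k - μ.length))
        rw [← he', List.length_eraseIdx_of_lt (by rw [List.length_append] at hk; omega)] at h4
        have h5 := reduced_snoc_lt cs hr
        have h6 := hr0.eq
        omega

theorem minReps_global (cs : CoxeterSystem M W) {L : Set B} {w : W} (hw : w ∈ minReps cs L) :
    ∀ x ∈ parab cs L, cs.length w ≤ cs.length (w * x) := by
  classical
  -- a global minimum of the coset
  have hex : ∃ n, ∃ x ∈ parab cs L, cs.length (w * x) = n := ⟨_, 1, one_mem _, rfl⟩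
  obtain ⟨x, hx, hn⟩ := Nat.find_spec hex
  have hmin : ∀ y ∈ parab cs L, cs.length (w * x) ≤ cs.length (w * y) := by
    intro y hy
    rw [hn]
    exact Nat.find_min' hex ⟨y, hy, rfl⟩
  have hm : ∀ y ∈ parab cs L, cs.length (w * x) ≤ cs.length (w * x * y) := by
    intro y hy
    rw [mul_assoc]
    exact hmin _ (mul_mem hx hy)
  obtain ⟨ω, hL, hr, hp⟩ := parab_word cs (inv_mem hx)
  rcases List.eq_nil_or_concat' ω with rfl | ⟨θ, i, rfl⟩
  · have : x = 1 := by simpa using hp.symm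
    subst this
    simpa using hmin
  · exfalso
    have hL' : ∀ j ∈ θ, j ∈ L := fun j hj => hL j (by simp [hj])
    have h1 := length_add_of_min cs hm _ hL hr
    have h2 := length_add_of_min cs hm _ hL' (reduced_init cs hr)
    have e1 : w * x * cs.wordProd (θ ++ [i]) = w := by rw [hp]; group
    have e2 : w * x * cs.wordProd θ = w * cs.simple i := by
      conv_rhs => rw [← e1, wordProd_snoc]
      simp [mul_assoc]
    rw [e1] at h1
    rw [e2] at h2
    have h3 := hw i (hL i (by simp))
    simp at h1
    omega

theorem minReps_add (cs : CoxeterSystem M W) {L : Set B} {w x : W} (hw : w ∈ minReps cs L)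
    (hx : x ∈ parab cs L) : cs.length (w * x) = cs.length w + cs.length x := by
  obtain ⟨ω, hL, hr, rfl⟩ := parab_word cs hx
  rw [length_add_of_min cs (minReps_global cs hw) ω hL hr, hr.eq]

theorem comm_up (cs : CoxeterSystem M W) {w : W} {i j : B}
    (hc : Commute (cs.simple i) (cs.simple j)) (hne : cs.simple i ≠ cs.simple j)
    (h : cs.length w < cs.length (w * cs.simple j)) :
    cs.length (w * cs.simple i) < cs.length (w * cs.simple i * cs.simple j) := by
  by_contra hcon
  have h1 := cs.length_mul_simple w i
  have h2 := cs.length_mul_simple (w * cs.simple i) j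
  have e : w * cs.simple i * cs.simple j = w * cs.simple j * cs.simple i := by
    rw [mul_assoc, hc.eq, mul_assoc]
  have h3 := cs.length_mul_simple (w * cs.simple j) i
  rw [← e] at h3
  rcases h1 with h1 | h1
  · obtain ⟨ω, hω, rfl⟩ := cs.exists_isReduced w
    have hr : cs.IsReduced (ω ++ [i]) := reduced_snoc cs hω (by omega)
    obtain ⟨k, hk, he⟩ := simple_exchange cs (ω ++ [i]) j (by rw [wordProd_snoc]; omega)
    rw [wordProd_snoc] at he
    rw [List.length_append, List.length_singleton] at hk
    by_cases hk' : k < ω.length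
    · rw [List.eraseIdx_append_of_lt_length hk', wordProd_snoc, e] at he
      have he' := mul_right_cancel he
      have h4 := cs.length_wordProd_le (ω.eraseIdx k)
      rw [← he', List.length_eraseIdx_of_lt hk'] at h4
      have := hω.eq
      omega
    · have hk2 : k = ω.length := by omega
      subst hk2
      rw [List.eraseIdx_append_of_length_le le_rfl] at he
      simp [mul_assoc] at he
      apply hne
      rw [mul_eq_one_iff_eq_inv] at he
      simpa using he
  · omega

theorem minReps_mul (cs : CoxeterSystem M W) {L N : Set B}
    (hc : ∀ i ∈ L, ∀ j ∈ N, Commute (cs.simple i) (cs.simple j) ∧ cs.simple i ≠ cs.simple j)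
    {w x : W} (hw : w ∈ minReps cs N) (hx : x ∈ parab cs L) : w * x ∈ minReps cs N := by
  obtain ⟨ω, hL, hr, rfl⟩ := parab_word cs hx
  clear hx hr
  induction ω using List.reverseRecOn with
  | nil => simpa using hw
  | append_singleton ω i ih =>
    rw [wordProd_snoc, ← mul_assoc]
    have := ih (fun j hj => hL j (by simp [hj]))
    intro j hj
    have hij := hc i (hL i (by simp)) j hj
    exact comm_up cs hij.1 hij.2 (this j hj)

theorem parab_comm (cs : CoxeterSystem M W) {L N : Set B}
    (hc : ∀ i ∈ L, ∀ j ∈ N, Commute (cs.simple i) (cs.simple j)) {x y : W}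
    (hx : x ∈ parab cs L) (hy : y ∈ parab cs N) : Commute x y := by
  have h1 : parab cs L ≤ Subgroup.centralizer (parab cs N : Set W) := by
    unfold parab
    rw [Subgroup.centralizer_closure, Subgroup.closure_le]
    rintro _ ⟨i, hi, rfl⟩
    rw [SetLike.mem_coe, Subgroup.mem_centralizer_iff]
    rintro _ ⟨j, hj, rfl⟩
    exact (hc i hi j hj).eq.symm
  exact (Subgroup.mem_centralizer_iff.1 (h1 hx) y hy).symm

section Setup

variable {cs : CoxeterSystem M W} {I J K : Set B} {σ : W → W}

theorem simple_ne_one (cs : CoxeterSystem M W) (i : B) : cs.simple i ≠ 1 := by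
  intro h
  have := cs.length_simple i
  rw [h, cs.length_one] at this
  omega

theorem GoodSetup.cIJ (h : GoodSetup cs I J K σ) :
    ∀ i ∈ I, ∀ j ∈ J, Commute (cs.simple i) (cs.simple j) ∧ cs.simple i ≠ cs.simple j := by
  intro i hi j hj
  refine ⟨h.commIJ i hi j hj, fun he => simple_ne_one cs i ?_⟩
  exact (h.directProd _ (simple_mem_parab cs hi) _ (simple_mem_parab cs hj) 1 (one_mem _)
    (by simp [he])).1

theorem GoodSetup.cIK (h : GoodSetup cs I J K σ) :
    ∀ i ∈ I, ∀ j ∈ K, Commute (cs.simple i) (cs.simple j) ∧ cs.simple i ≠ cs.simple j := by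
  intro i hi j hj
  refine ⟨h.commIK i hi j hj, fun he => simple_ne_one cs i ?_⟩
  exact (h.directProd _ (simple_mem_parab cs hi) 1 (one_mem _) _ (simple_mem_parab cs hj)
    (by simp [he])).1

theorem GoodSetup.cJK (h : GoodSetup cs I J K σ) :
    ∀ i ∈ J, ∀ j ∈ K, Commute (cs.simple i) (cs.simple j) ∧ cs.simple i ≠ cs.simple j := by
  intro i hi j hj
  refine ⟨h.commJK i hi j hj, fun he => simple_ne_one cs i ?_⟩
  exact (h.directProd 1 (one_mem _) _ (simple_mem_parab cs hi) _ (simple_mem_parab cs hj)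
    (by simp [he])).2.1

theorem GoodSetup.sigma_mem (h : GoodSetup cs I J K σ) {x : W} (hx : x ∈ parab cs I) :
    σ x ∈ parab cs J := h.bijSigma.mapsTo hx

theorem GoodSetup.sigma_one (h : GoodSetup cs I J K σ) : σ 1 = 1 := by
  have := h.mulSigma 1 (one_mem _) 1 (one_mem _)
  simpa using this

/-- `σ` is onto the simple reflections of `J`. -/
theorem GoodSetup.simple_surj (h : GoodSetup cs I J K σ) {j : B} (hj : j ∈ J) :
    ∃ i ∈ I, σ (cs.simple i) = cs.simple j := by
  let J' : Set B := {k | k ∈ J ∧ ∃ i ∈ I, σ (cs.simple i) = cs.simple k}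
  have himg : ∀ x ∈ parab cs I, σ x ∈ parab cs J' := by
    intro x hx
    obtain ⟨ω, hL, hr, rfl⟩ := parab_word cs hx
    clear hx hr
    induction ω with
    | nil => simpa [h.sigma_one] using one_mem _
    | cons i ω ih =>
      have hi : i ∈ I := hL i (by simp)
      have hω : ∀ j ∈ ω, j ∈ I := fun j hj => hL j (by simp [hj])
      rw [cs.wordProd_cons, h.mulSigma _ (simple_mem_parab cs hi) _ (word_mem_parab cs ω hω)]
      refine mul_mem ?_ (ih hω)
      obtain ⟨k, hk, he⟩ := h.simpleSigma i hi
      rw [he]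
      exact simple_mem_parab cs ⟨hk, i, hi, he⟩
  obtain ⟨x, hx, hxj⟩ := h.bijSigma.surjOn (simple_mem_parab cs hj)
  have h1 := himg x hx
  rw [hxj] at h1
  obtain ⟨ω, hL, hr, hp⟩ := parab_word cs h1
  have hlen := hr.eq
  rw [hp, cs.length_simple] at hlen
  obtain ⟨k, rfl⟩ := List.length_eq_one_iff.1 hlen.symm
  obtain ⟨_, i, hi, he⟩ := hL k (by simp)
  refine ⟨i, hi, ?_⟩
  rw [he]
  simpa using hp

theorem GoodSetup.lift_word (h : GoodSetup cs I J K σ) (ω : List B) (hω : ∀ j ∈ ω, j ∈ J) :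
    ∃ x ∈ parab cs I, σ x = cs.wordProd ω ∧ cs.length x ≤ ω.length := by
  induction ω with
  | nil => exact ⟨1, one_mem _, by simp [h.sigma_one], by simp⟩
  | cons j ω ih =>
    obtain ⟨x, hx, he, hl⟩ := ih fun j hj => hω j (by simp [hj])
    obtain ⟨i, hi, hij⟩ := h.simple_surj (hω j (by simp))
    refine ⟨cs.simple i * x, mul_mem (simple_mem_parab cs hi) hx, ?_, ?_⟩
    · rw [h.mulSigma _ (simple_mem_parab cs hi) _ hx, hij, he, cs.wordProd_cons]
    · have := cs.length_mul_le (cs.simple i) x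
      rw [cs.length_simple] at this
      simp
      omega

theorem GoodSetup.length_sigma (h : GoodSetup cs I J K σ) {x : W} (hx : x ∈ parab cs I) :
    cs.length x ≤ cs.length (σ x) := by
  obtain ⟨ω, hL, hr, hp⟩ := parab_word cs (h.sigma_mem hx)
  obtain ⟨y, hy, he, hl⟩ := h.lift_word ω hL
  have : y = x := h.bijSigma.injOn hy hx (by rw [he, hp])
  rw [← this, he, hr.eq]
  exact hl

theorem inCoset_refl (h : GoodSetup cs I J K σ) (w : W) : inCoset cs I K σ w w :=
  ⟨1, one_mem _, 1, one_mem _, by simp [h.sigma_one]⟩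

theorem GoodSetup.inCoset_trans (h : GoodSetup cs I J K σ) {u v w : W}
    (h1 : inCoset cs I K σ u v) (h2 : inCoset cs I K σ v w) : inCoset cs I K σ u w := by
  obtain ⟨a, ha, x, hx, rfl⟩ := h1
  obtain ⟨b, hb, y, hy, rfl⟩ := h2
  refine ⟨a * b, mul_mem ha hb, x * y, mul_mem hx hy, ?_⟩
  have c1 : Commute x b := parab_comm cs h.commIK hx hb
  have c2 : Commute (σ x) b := parab_comm cs h.commJK (h.sigma_mem hx) hb
  have c3 : Commute y (σ x) := parab_comm cs h.commIJ hy (h.sigma_mem hx)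
  have c4 : x * σ x * b = b * (x * σ x) := (c1.mul_left c2).eq
  rw [h.mulSigma x hx y hy]
  calc u * a * (x * σ x) * b * (y * σ y) = u * a * (x * σ x * b) * (y * σ y) := by
        simp only [mul_assoc]
    _ = u * a * b * x * (σ x * y) * σ y := by rw [c4]; simp only [mul_assoc]
    _ = u * (a * b) * (x * y * (σ x * σ y)) := by rw [← c3.eq]; simp only [mul_assoc]

/-- Every element below the first argument has a coset mate below the second one. -/
def transfers (cs : CoxeterSystem M W) (I K : Set B) (σ : W → W) (v v' : W) : Prop :=
  ∀ u, BruhatLE cs u v → ∃ u', inCoset cs I K σ u u' ∧ BruhatLE cs u' v'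

theorem GoodSetup.transfers_trans (h : GoodSetup cs I J K σ) {v v' v'' : W}
    (h1 : transfers cs I K σ v v') (h2 : transfers cs I K σ v' v'') :
    transfers cs I K σ v v'' := by
  intro u hu
  obtain ⟨u', c1, b1⟩ := h1 u hu
  obtain ⟨u'', c2, b2⟩ := h2 u' b1
  exact ⟨u'', h.inCoset_trans c1 c2, b2⟩

theorem GoodSetup.transfers_K_step (h : GoodSetup cs I J K σ) (v : W) {k : B} (hk : k ∈ K) :
    transfers cs I K σ v (v * cs.simple k) := by
  intro u hu
  have hc : inCoset cs I K σ u (u * cs.simple k) :=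
    ⟨_, simple_mem_parab cs hk, 1, one_mem _, by simp [h.sigma_one]⟩
  rcases lt_or_lt cs v k with hv | hv
  · exact ⟨u, inCoset_refl h u, bruhat_trans cs hu (bruhat_up cs hv)⟩
  · rcases lt_or_lt cs u k with hu' | hu'
    · exact ⟨u, inCoset_refl h u, (bruhat_down cs hu hv).1 hu'⟩
    · exact ⟨_, hc, (bruhat_down cs hu hv).2 hu'⟩

theorem GoodSetup.transfers_K (h : GoodSetup cs I J K σ) (v : W) {a : W} (ha : a ∈ parab cs K) :
    transfers cs I K σ v (v * a) := by
  obtain ⟨ω, hL, hr, rfl⟩ := parab_word cs ha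
  clear ha hr
  induction ω using List.reverseRecOn with
  | nil =>
    intro u hu
    exact ⟨u, inCoset_refl h u, by simpa using hu⟩
  | append_singleton ω k ih =>
    rw [wordProd_snoc, ← mul_assoc]
    exact h.transfers_trans (ih fun j hj => hL j (by simp [hj]))
      (h.transfers_K_step _ (hL k (by simp)))

theorem GoodSetup.transfers_IJ_step (h : GoodSetup cs I J K σ) {v : W} {i j : B} (hi : i ∈ I)
    (hj : j ∈ J) (hij : σ (cs.simple i) = cs.simple j)
    (hv : cs.length v < cs.length (v * cs.simple j)) :
    transfers cs I K σ v (v * cs.simple i * cs.simple j) := by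
  intro u hu
  have hc : inCoset cs I K σ u (u * cs.simple i * cs.simple j) :=
    ⟨1, one_mem _, _, simple_mem_parab cs hi, by rw [hij]; simp [mul_assoc]⟩
  have hv2 := comm_up cs (h.cIJ i hi j hj).1 (h.cIJ i hi j hj).2 hv
  rcases lt_or_lt cs v i with hvi | hvi
  · exact ⟨u, inCoset_refl h u,
      bruhat_trans cs hu (bruhat_trans cs (bruhat_up cs hvi) (bruhat_up cs hv2))⟩
  · rcases lt_or_lt cs u i with hu' | hu'
    · exact ⟨u, inCoset_refl h u,
        bruhat_trans cs ((bruhat_down cs hu hvi).1 hu') (bruhat_up cs hv2)⟩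
    · exact ⟨_, hc, bruhat_mul_up cs ((bruhat_down cs hu hvi).2 hu') hv2⟩

theorem GoodSetup.transfers_IJ (h : GoodSetup cs I J K σ) {w : W} (hw : w ∈ minReps cs J)
    (ω : List B) : (∀ j ∈ ω, j ∈ J) → cs.IsReduced ω → ∀ x ∈ parab cs I, σ x = cs.wordProd ω →
      transfers cs I K σ w (w * (x * σ x)) := by
  induction ω using List.reverseRecOn with
  | nil =>
    intro _ _ x hx he u hu
    have : x = 1 := h.bijSigma.injOn hx (one_mem _) (by rw [he, h.sigma_one]; simp)
    subst this
    exact ⟨u, inCoset_refl h u, by simpa [h.sigma_one] using hu⟩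
  | append_singleton ω j ih =>
    intro hL hr x hx he
    have hj : j ∈ J := hL j (by simp)
    have hL' : ∀ k ∈ ω, k ∈ J := fun k hk => hL k (by simp [hk])
    have hr0 := reduced_init cs hr
    obtain ⟨i, hi, hij⟩ := h.simple_surj hj
    have hsi := simple_mem_parab cs hi
    have hy : x * cs.simple i ∈ parab cs I := mul_mem hx hsi
    have hey : σ (x * cs.simple i) = cs.wordProd ω := by
      rw [h.mulSigma x hx _ hsi, hij, he, wordProd_snoc]; simp
    have h1 := ih hL' hr0 _ hy hey
    have hm := minReps_mul cs h.cIJ hw hy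
    have hg := minReps_global cs hm
    have l1 := length_add_of_min cs hg ω hL' hr0
    have l2 := length_add_of_min cs hg _ hL hr
    have h2 := h.transfers_IJ_step (v := w * (x * cs.simple i * σ (x * cs.simple i))) hi hj hij (by
      rw [wordProd_snoc, ← mul_assoc] at l2
      rw [hey, ← mul_assoc, l1, l2]
      simp)
    have e : w * (x * cs.simple i * σ (x * cs.simple i)) * cs.simple i * cs.simple j =
        w * (x * σ x) := by
      have c : Commute (cs.simple i) (cs.wordProd ω) :=
        parab_comm cs h.commIJ hsi (word_mem_parab cs ω hL')
      rw [hey, he, wordProd_snoc]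
      have : cs.simple i * cs.wordProd ω * cs.simple i = cs.wordProd ω := by
        rw [c.eq]; simp
      calc _ = w * x * (cs.simple i * cs.wordProd ω * cs.simple i) * cs.simple j := by
            simp only [mul_assoc]
        _ = _ := by rw [this]; simp only [mul_assoc]
    rw [e] at h2
    exact h.transfers_trans h1 h2

theorem GoodSetup.transfers_coset (h : GoodSetup cs I J K σ) {w v : W} (hw : w ∈ minReps cs J)
    (hv : inCoset cs I K σ w v) : transfers cs I K σ w v := by
  obtain ⟨a, ha, x, hx, rfl⟩ := hv
  obtain ⟨ω, hL, hr, hp⟩ := parab_word cs (h.sigma_mem hx)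
  have h1 := h.transfers_IJ hw ω hL hr x hx hp.symm
  have c1 : Commute x a := parab_comm cs h.commIK hx ha
  have c2 : Commute (σ x) a := parab_comm cs h.commJK (h.sigma_mem hx) ha
  have e : w * a * (x * σ x) = w * (x * σ x) * a := by
    rw [mul_assoc, ← (c1.mul_left c2).eq, ← mul_assoc]
  rw [e]
  exact h.transfers_trans h1 (h.transfers_K _ ha)

theorem GoodSetup.length_coset (h : GoodSetup cs I J K σ) {w a x : W}
    (hw : w ∈ minReps cs (J ∪ K)) (ha : a ∈ parab cs K) (hx : x ∈ parab cs I) :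
    cs.length (w * a * (x * σ x)) = cs.length (w * x) + cs.length (σ x) + cs.length a := by
  have hJ : w ∈ minReps cs J := fun i hi => hw i (Or.inl hi)
  have hK : w ∈ minReps cs K := fun i hi => hw i (Or.inr hi)
  have c1 : Commute x a := parab_comm cs h.commIK hx ha
  have c2 : Commute (σ x) a := parab_comm cs h.commJK (h.sigma_mem hx) ha
  have e : w * a * (x * σ x) = w * x * σ x * a := by
    rw [mul_assoc, ← (c1.mul_left c2).eq]
    simp only [mul_assoc]
  rw [e, minReps_add cs (minReps_mul cs h.cJK (minReps_mul cs h.cIK hK hx) (h.sigma_mem hx)) ha,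
    minReps_add cs (minReps_mul cs h.cIJ hJ hx) (h.sigma_mem hx)]

theorem GoodSetup.leO_length (h : GoodSetup cs I J K σ) {w w' : W}
    (hw' : w' ∈ minReps cs (J ∪ K)) (hl : leO cs I K σ w' w) : cs.length w' ≤ cs.length w := by
  obtain ⟨u, ⟨a, ha, x, hx, rfl⟩, hb⟩ := hl
  have h1 := bruhat_length cs hb
  rw [h.length_coset hw' ha hx] at h1
  have h2 := h.length_sigma hx
  have h3 := cs.length_le_length_mul_add_right w' x
  omega

end Setup

theorem statement_3 (cs : CoxeterSystem M W) (I J K : Set B) (σ : W → W)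
    (h : GoodSetup cs I J K σ) :
    (∀ w ∈ minReps cs (J ∪ K), leO cs I K σ w w) ∧
    (∀ w ∈ minReps cs (J ∪ K), ∀ w' ∈ minReps cs (J ∪ K),
      leO cs I K σ w' w → leO cs I K σ w w' → w' = w) ∧
    (∀ w₁ ∈ minReps cs (J ∪ K), ∀ w₂ ∈ minReps cs (J ∪ K), ∀ w₃ ∈ minReps cs (J ∪ K),
      leO cs I K σ w₁ w₂ → leO cs I K σ w₂ w₃ → leO cs I K σ w₁ w₃) := by
  refine ⟨fun w _ => ⟨w, inCoset_refl h w, bruhat_refl cs w⟩, ?_, ?_⟩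
  · intro w hw w' hw' h1 h2
    have l2 := h.leO_length hw h2
    obtain ⟨u, ⟨a, ha, x, hx, rfl⟩, hb⟩ := h1
    have l1 := bruhat_length cs hb
    have lc := h.length_coset hw' ha hx
    have l3 := h.length_sigma hx
    have l4 := cs.length_le_length_mul_add_right w' x
    have hu := bruhat_eq cs hb (by omega)
    have ha1 : a = 1 := cs.length_eq_zero_iff.1 (by omega)
    subst ha1
    have hJ : w ∈ minReps cs J := fun i hi => hw i (Or.inl hi)
    have l5 := minReps_add cs hJ (inv_mem (h.sigma_mem hx))
    have e : w * (σ x)⁻¹ = w' * x := by rw [← hu]; simp [mul_assoc]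
    rw [e, cs.length_inv] at l5
    rw [hu] at lc
    have hx1 : x = 1 := cs.length_eq_zero_iff.1 (by omega)
    subst hx1
    simpa [h.sigma_one] using hu
  · intro w₁ _ w₂ hw₂ w₃ _ h1 h2
    obtain ⟨u₁, c1, b1⟩ := h1
    obtain ⟨u₂, c2, b2⟩ := h2
    have hJ : w₂ ∈ minReps cs J := fun i hi => hw₂ i (Or.inl hi)
    obtain ⟨u', c3, b3⟩ := h.transfers_coset hJ c2 u₁ b1
    exact ⟨u', h.inCoset_trans c1 c3, bruhat_trans cs b3 b2⟩

end BruhatSetup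
end

section
/- With the setup of ≤_O: the poset (W(I,J,K), ≤_O) is graded by the length function; that is, whenever w covers w' in the order ≤_O, one has ℓ(w') = ℓ(w) − 1. -/
section BruhatSetup

variable {B : Type*} {W : Type*} [Group W] {M : CoxeterMatrix B}

namespace OrdO

open Classical in
/-- The reflection cocycle action of a simple generator. -/
noncomputable def fS (cs : CoxeterSystem M W) (i : B) : Function.End (W × ZMod 2) :=
  fun p => (cs.simple i * p.1 * cs.simple i, p.2 + if p.1 = cs.simple i then 1 else 0)

open Classical in
theorem fS_pow (cs : CoxeterSystem M W) (i j : B) (n : ℕ) (t : W) (e : ZMod 2) :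
    ((fS cs i * fS cs j) ^ n) (t, e) =
      ((cs.simple i * cs.simple j) ^ n * t * ((cs.simple i * cs.simple j) ^ n)⁻¹,
        e + ∑ k ∈ Finset.range (2 * n),
          if t = cs.simple j * (cs.simple i * cs.simple j) ^ k then 1 else 0) := by
  induction n with
  | zero => simp; rfl
  | succ n ih =>
    have key : ∀ k : ℕ, ((cs.simple i * cs.simple j) ^ k)⁻¹ * cs.simple j
        = cs.simple j * (cs.simple i * cs.simple j) ^ k := by
      intro k
      induction k with
      | zero => simp
      | succ k ihk =>
        rw [pow_succ (cs.simple i * cs.simple j) k, mul_inv_rev, mul_assoc, ihk]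
        rw [← pow_succ, pow_succ']
        simp [mul_assoc]
    have step : ∀ p : W × ZMod 2, ((fS cs i * fS cs j) ^ (n+1)) p
        = (fS cs i) ((fS cs j) (((fS cs i * fS cs j) ^ n) p)) := by
      intro p; rw [pow_succ']; rfl
    rw [step, ih]
    set ρ := cs.simple i * cs.simple j with hρ
    have e1 : (ρ ^ n * t * (ρ ^ n)⁻¹ = cs.simple j) ↔ t = cs.simple j * ρ ^ (2 * n) := by
      have : cs.simple j * ρ ^ (2 * n) = (ρ^n)⁻¹ * cs.simple j * ρ ^ n := by
        rw [key, two_mul, pow_add, mul_assoc]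
      rw [this]
      constructor
      · intro h; rw [← h]; group
      · intro h; rw [h]; group
    have e2 : (cs.simple j * (ρ ^ n * t * (ρ ^ n)⁻¹) * cs.simple j = cs.simple i) ↔
        t = cs.simple j * ρ ^ (2 * n + 1) := by
      have : cs.simple j * ρ ^ (2 * n + 1) =
          (ρ^n)⁻¹ * (cs.simple j * cs.simple i * cs.simple j) * ρ ^ n := by
        have : (ρ^n)⁻¹ * (cs.simple j * cs.simple i * cs.simple j) * ρ ^ n
          = ((ρ^n)⁻¹ * cs.simple j) * (ρ * ρ ^ n) := by
            rw [hρ]; simp only [mul_assoc]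
        rw [this, key, ← pow_succ', mul_assoc, ← pow_add]
        congr 2; ring
      rw [this]
      constructor
      · intro h; rw [← h]
        have := cs.simple_mul_simple_self j
        calc t = (ρ ^ n)⁻¹ * ((cs.simple j * cs.simple j) * (ρ ^ n * t * (ρ ^ n)⁻¹) *
            (cs.simple j * cs.simple j)) * ρ ^ n := by rw [this]; group
          _ = _ := by simp only [mul_assoc]
      · intro h; rw [h]
        simp [mul_assoc]
    simp only [fS]
    refine Prod.ext ?_ ?_
    · simp only [pow_succ' ρ n, mul_inv_rev]
      have : ρ⁻¹ = cs.simple j * cs.simple i := by simp [hρ]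
      rw [this, hρ]
      simp only [mul_assoc]
    · simp only [e1, e2]
      rw [show 2 * (n+1) = 2 * n + 1 + 1 by ring, Finset.sum_range_succ, Finset.sum_range_succ]
      ring

theorem fS_liftable (cs : CoxeterSystem M W) : M.IsLiftable (fS cs) := by
  classical
  intro i j
  funext p
  obtain ⟨t, e⟩ := p
  rw [fS_pow, cs.simple_mul_simple_pow]
  have : ∀ f : ℕ → ZMod 2, (∀ k, f (M i j + k) = f k) →
      ∑ k ∈ Finset.range (2 * M i j), f k = 0 := by
    intro f hf
    rw [two_mul, Finset.sum_range_add]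
    simp only [hf]
    exact CharTwo.add_self_eq_zero _
  rw [this]
  · simp; rfl
  · intro k
    rw [pow_add, cs.simple_mul_simple_pow, one_mul]

noncomputable def FS (cs : CoxeterSystem M W) : W →* Function.End (W × ZMod 2) :=
  cs.lift ⟨fS cs, fS_liftable cs⟩

theorem FS_simple (cs : CoxeterSystem M W) (i : B) : FS cs (cs.simple i) = fS cs i :=
  cs.lift_apply_simple _ _

open Classical in
theorem FS_word (cs : CoxeterSystem M W) (ω : List B) (t : W) (e : ZMod 2) :
    FS cs (cs.wordProd ω) (t, e) =
      (cs.wordProd ω * t * (cs.wordProd ω)⁻¹, e + ((cs.rightInvSeq ω).count t : ℕ)) := by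
  induction ω with
  | nil => simp; rfl
  | cons i ω ih =>
    have : FS cs (cs.wordProd (i :: ω)) (t, e) = fS cs i (FS cs (cs.wordProd ω) (t, e)) := by
      rw [cs.wordProd_cons, map_mul, FS_simple]; rfl
    rw [this, ih]
    simp only [fS, CoxeterSystem.rightInvSeq, cs.wordProd_cons, List.count_cons]
    refine Prod.ext (by simp [mul_assoc]) ?_
    have e1 : (cs.wordProd ω * t * (cs.wordProd ω)⁻¹ = cs.simple i) ↔
      ((cs.wordProd ω)⁻¹ * cs.simple i * cs.wordProd ω = t) := by
      constructor
      · intro h; rw [← h]; group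
      · intro h; rw [← h]; group
    simp only [e1, beq_iff_eq]
    push_cast
    rw [add_assoc]

/-- The cocycle. -/
noncomputable def NN (cs : CoxeterSystem M W) (w t : W) : ZMod 2 := (FS cs w (t, 0)).2

theorem FS_eq (cs : CoxeterSystem M W) (w t : W) (e : ZMod 2) :
    FS cs w (t, e) = (w * t * w⁻¹, e + NN cs w t) := by
  classical
  obtain ⟨ω, rfl⟩ := cs.wordProd_surjective w
  simp [NN, FS_word]

theorem NN_mul (cs : CoxeterSystem M W) (v w t : W) :
    NN cs (v * w) t = NN cs w t + NN cs v (w * t * w⁻¹) := by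
  have : FS cs (v * w) (t, 0) = FS cs v (FS cs w (t, 0)) := by rw [map_mul]; rfl
  have h2 := congrArg Prod.snd this
  rw [FS_eq, FS_eq, FS_eq] at h2
  simpa using h2

theorem NN_one (cs : CoxeterSystem M W) (t : W) : NN cs 1 t = 0 := by
  simp [NN]; rfl

theorem NN_refl (cs : CoxeterSystem M W) (t : W) (ht : cs.IsReflection t) : NN cs t t = 1 := by
  obtain ⟨x, i, rfl⟩ := ht
  have h1 := NN_mul cs x x⁻¹ (x * cs.simple i * x⁻¹)
  rw [mul_inv_cancel, NN_one] at h1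
  rw [mul_assoc x, NN_mul, NN_mul]
  have e1 : x⁻¹ * (x * (cs.simple i * x⁻¹)) * x⁻¹⁻¹ = cs.simple i := by group
  have e2 : cs.simple i * x⁻¹ * (x * (cs.simple i * x⁻¹)) * (cs.simple i * x⁻¹)⁻¹
    = cs.simple i := by simp [mul_assoc]
  have e3 : x⁻¹ * (x * cs.simple i * x⁻¹) * x⁻¹⁻¹ = cs.simple i := by group
  rw [e3, mul_assoc] at h1
  rw [e1, e2]
  have : NN cs (cs.simple i) (cs.simple i) = 1 := by
    simp [NN, FS_simple, fS]
  rw [this, add_right_comm, ← h1, zero_add]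

/-- Strong exchange, right form. -/
theorem strong_exchange (cs : CoxeterSystem M W) (ω : List B) (t : W) (ht : cs.IsReflection t)
    (hl : cs.length (cs.wordProd ω * t) < cs.length (cs.wordProd ω)) :
    ∃ k < ω.length, cs.wordProd ω * t = cs.wordProd (ω.eraseIdx k) := by
  classical
  have hN : NN cs (cs.wordProd ω) t ≠ 0 := by
    intro h0
    have h1 := NN_mul cs (cs.wordProd ω) t t
    rw [NN_refl cs t ht] at h1
    have : t * t * t⁻¹ = t := by group
    rw [this, h0, add_zero] at h1
    obtain ⟨ω', hr, hω'⟩ := cs.exists_isReduced (cs.wordProd ω * t)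
    rw [hω', NN, FS_word] at h1
    have hm : t ∈ cs.rightInvSeq ω' := by
      by_contra hn
      rw [List.count_eq_zero_of_not_mem hn] at h1
      simp at h1
    have := (cs.isRightInversion_of_mem_rightInvSeq hr hm).2
    rw [← hω', mul_assoc, ht.mul_self, mul_one] at this
    omega
  have hm : t ∈ cs.rightInvSeq ω := by
    by_contra hn
    apply hN
    rw [NN, FS_word, List.count_eq_zero_of_not_mem hn]
    simp
  obtain ⟨k, hk, hkt⟩ := List.getElem_of_mem hm
  refine ⟨k, by simpa using hk, ?_⟩
  rw [← cs.wordProd_mul_getD_rightInvSeq, List.getD_eq_getElem _ _ hk, hkt]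

/-- One step up in Bruhat order. -/
def step (cs : CoxeterSystem M W) (x y : W) : Prop :=
  (∃ t, cs.IsReflection t ∧ y = x * t) ∧ cs.length x < cs.length y

/-- Bruhat order, chain form. -/
def ble (cs : CoxeterSystem M W) : W → W → Prop := Relation.ReflTransGen (step cs)

theorem ble_refl (cs : CoxeterSystem M W) (x : W) : ble cs x x := Relation.ReflTransGen.refl

theorem ble_trans {cs : CoxeterSystem M W} {x y z : W} (h1 : ble cs x y) (h2 : ble cs y z) :
    ble cs x z := Relation.ReflTransGen.trans h1 h2

theorem ble_length {cs : CoxeterSystem M W} {x y : W} (h : ble cs x y) :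
    cs.length x ≤ cs.length y := by
  induction h with
  | refl => exact le_rfl
  | tail _ h2 ih => exact ih.trans h2.2.le

theorem ble_eq {cs : CoxeterSystem M W} {x y : W} (h : ble cs x y)
    (hl : cs.length y ≤ cs.length x) : x = y := by
  rcases Relation.ReflTransGen.cases_tail h with h | ⟨z, h1, h2⟩
  · exact h.symm
  · have h3 : cs.length x ≤ cs.length z := ble_length h1
    have := h2.2
    omega

theorem step_inv {cs : CoxeterSystem M W} {x y : W} (h : step cs x y) : step cs x⁻¹ y⁻¹ := by
  obtain ⟨⟨t, ht, rfl⟩, hl⟩ := h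
  refine ⟨⟨x * t * x⁻¹, ht.conj x, ?_⟩, by simpa only [cs.length_inv] using hl⟩
  rw [mul_inv_rev, ht.inv]; group

theorem ble_inv {cs : CoxeterSystem M W} {x y : W} (h : ble cs x y) : ble cs x⁻¹ y⁻¹ := by
  induction h with
  | refl => exact ble_refl _ _
  | tail _ h2 ih => exact ih.tail (step_inv h2)

theorem ble_mul_simple (cs : CoxeterSystem M W) (x : W) (i : B)
    (hl : cs.length x < cs.length (x * cs.simple i)) : ble cs x (x * cs.simple i) :=
  Relation.ReflTransGen.single ⟨⟨_, cs.isReflection_simple i, rfl⟩, hl⟩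

theorem ble_simple_mul (cs : CoxeterSystem M W) (x : W) (i : B)
    (hl : cs.length x < cs.length (cs.simple i * x)) : ble cs x (cs.simple i * x) := by
  refine Relation.ReflTransGen.single ⟨⟨x⁻¹ * cs.simple i * x, ?_, by group⟩, hl⟩
  simpa using (cs.isReflection_simple i).conj x⁻¹

theorem ble_mul_simple' (cs : CoxeterSystem M W) (x : W) (i : B)
    (hl : cs.length (x * cs.simple i) < cs.length x) : ble cs (x * cs.simple i) x := by
  have := ble_mul_simple cs (x * cs.simple i) i (by simpa using hl)
  simpa using this

theorem ble_simple_mul' (cs : CoxeterSystem M W) (x : W) (i : B)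
    (hl : cs.length (cs.simple i * x) < cs.length x) : ble cs (cs.simple i * x) x := by
  have := ble_simple_mul cs (cs.simple i * x) i (by simpa using hl)
  simpa using this

theorem step_mul_left {cs : CoxeterSystem M W} {x y : W} (h : step cs x y) (i : B) :
    step cs (cs.simple i * x) (cs.simple i * y) ∨ cs.simple i * y = x := by
  obtain ⟨⟨t, ht, rfl⟩, hl⟩ := h
  by_cases hlt : cs.length (cs.simple i * x) < cs.length (cs.simple i * (x * t))
  · exact Or.inl ⟨⟨t, ht, by rw [mul_assoc]⟩, hlt⟩
  right
  have hne : cs.length (cs.simple i * (x * t)) ≠ cs.length (cs.simple i * x) := by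
    rw [← mul_assoc]; exact ht.length_mul_left_ne _
  have h1 := cs.length_simple_mul x i
  have h2 := cs.length_simple_mul (x * t) i
  obtain ⟨ω, hr, hω⟩ := cs.exists_isReduced (cs.simple i * (x * t))
  have hy : cs.wordProd (i :: ω) = x * t := by
    rw [cs.wordProd_cons, ← hω]; simp
  have hrl := hr.eq
  obtain ⟨k, hk, he⟩ := strong_exchange cs (i :: ω) t ht (by
    rw [hy, mul_assoc, ht.mul_self, mul_one]; exact hl)
  rw [hy, mul_assoc, ht.mul_self, mul_one] at he
  cases k with
  | zero => simpa [← hω] using he.symm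
  | succ k =>
    exfalso
    simp only [List.eraseIdx_cons_succ, cs.wordProd_cons] at he
    simp only [List.length_cons] at hk
    have h3 : cs.simple i * x = cs.wordProd (ω.eraseIdx k) := by rw [he]; simp
    have h4 := cs.length_wordProd_le (ω.eraseIdx k)
    rw [List.length_eraseIdx_of_lt (by omega)] at h4
    rw [← h3] at h4
    rw [← hω] at hrl
    omega

theorem zl {cs : CoxeterSystem M W} {x y : W} (h : ble cs x y) (i : B) :
    ble cs (cs.simple i * x) y ∨ ble cs (cs.simple i * x) (cs.simple i * y) := by
  induction h with
  | refl => exact Or.inr (ble_refl _ _)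
  | @tail z y _ h2 ih =>
    rcases ih with ih | ih
    · exact Or.inl (ih.tail h2)
    · rcases step_mul_left h2 i with h3 | h3
      · exact Or.inr (ih.tail h3)
      · left
        rw [← h3] at ih
        simpa using ih

theorem zl' {cs : CoxeterSystem M W} {x y : W} (h : ble cs x y) (i : B) :
    ble cs x (cs.simple i * y) ∨ ble cs (cs.simple i * x) (cs.simple i * y) := by
  induction h with
  | refl => exact Or.inr (ble_refl _ _)
  | @tail z y h1 h2 ih =>
    rcases step_mul_left h2 i with h3 | h3
    · rcases ih with ih | ih
      · exact Or.inl (ih.tail h3)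
      · exact Or.inr (ih.tail h3)
    · left; rw [h3]; exact h1

theorem zr {cs : CoxeterSystem M W} {x y : W} (h : ble cs x y) (i : B) :
    ble cs (x * cs.simple i) y ∨ ble cs (x * cs.simple i) (y * cs.simple i) := by
  rcases zl (ble_inv h) i with h | h
  · left; simpa using ble_inv h
  · right; simpa using ble_inv h

theorem zr' {cs : CoxeterSystem M W} {x y : W} (h : ble cs x y) (i : B) :
    ble cs x (y * cs.simple i) ∨ ble cs (x * cs.simple i) (y * cs.simple i) := by
  rcases zl' (ble_inv h) i with h | h
  · left; simpa using ble_inv h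
  · right; simpa using ble_inv h

/-- lifting, left -/
theorem lift_left {cs : CoxeterSystem M W} {x y : W} (h : ble cs x y) (i : B)
    (hx : cs.length x < cs.length (cs.simple i * x)) : ble cs x (cs.simple i * y) := by
  rcases zl' h i with h | h
  · exact h
  · exact ble_trans (ble_simple_mul cs x i hx) h

theorem lift_right {cs : CoxeterSystem M W} {x y : W} (h : ble cs x y) (i : B)
    (hx : cs.length x < cs.length (x * cs.simple i)) : ble cs x (y * cs.simple i) := by
  rcases zr' h i with h | h
  · exact h
  · exact ble_trans (ble_mul_simple cs x i hx) h

theorem reduced_cons {cs : CoxeterSystem M W} {i : B} {ω : List B} (h : cs.IsReduced (i :: ω)) :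
    cs.IsReduced ω := by simpa using h.drop 1

theorem exists_reduced_sublist (cs : CoxeterSystem M W) (ω : List B) :
    ∃ ω', List.Sublist ω' ω ∧ cs.IsReduced ω' ∧ cs.wordProd ω' = cs.wordProd ω := by
  induction ω with
  | nil => exact ⟨[], List.Sublist.refl _, by simp [CoxeterSystem.IsReduced], rfl⟩
  | cons i ω ih =>
    obtain ⟨ω', hs, hr, hp⟩ := ih
    have hrl := hr.eq
    rcases cs.length_simple_mul (cs.wordProd ω') i with h | h
    · refine ⟨i :: ω', hs.cons_cons i, ?_, by rw [cs.wordProd_cons, cs.wordProd_cons, hp]⟩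
      rw [CoxeterSystem.IsReduced, cs.wordProd_cons, h, hrl, List.length_cons]
    · have hc : cs.wordProd ω' * ((cs.wordProd ω')⁻¹ * cs.simple i * cs.wordProd ω')
          = cs.simple i * cs.wordProd ω' := by group
      obtain ⟨k, hk, he⟩ := strong_exchange cs ω'
        ((cs.wordProd ω')⁻¹ * cs.simple i * cs.wordProd ω')
        (by simpa using (cs.isReflection_simple i).conj (cs.wordProd ω')⁻¹)
        (by rw [hc]; omega)
      rw [hc] at he
      refine ⟨ω'.eraseIdx k, ((List.eraseIdx_sublist _ _).trans hs).cons i, ?_, ?_⟩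
      · rw [CoxeterSystem.IsReduced, ← he, List.length_eraseIdx_of_lt hk]; omega
      · rw [← he, cs.wordProd_cons, hp]

theorem ble_of_sublist {cs : CoxeterSystem M W} {ω ω' : List B} (hs : List.Sublist ω' ω)
    (hr : cs.IsReduced ω) : ble cs (cs.wordProd ω') (cs.wordProd ω) := by
  induction hs with
  | slnil => exact ble_refl _ _
  | @cons l₁ l₂ i _ ih =>
    have h1 := ih (reduced_cons hr)
    refine ble_trans h1 ?_
    rw [cs.wordProd_cons]
    apply ble_simple_mul
    have h2 := (reduced_cons hr).eq
    have h3 := hr.eq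
    rw [cs.wordProd_cons, List.length_cons] at h3
    omega
  | @cons_cons l₁ l₂ i _ ih =>
    have h1 := ih (reduced_cons hr)
    have h2 := (reduced_cons hr).eq
    have h3 := hr.eq
    rw [cs.wordProd_cons, List.length_cons] at h3
    rw [cs.wordProd_cons, cs.wordProd_cons]
    rcases zl h1 i with h | h
    · exact ble_trans h (ble_simple_mul _ _ _ (by omega))
    · exact h

theorem exists_sublist_of_ble {cs : CoxeterSystem M W} {u w : W} (h : ble cs u w) (ω : List B)
    (hω : cs.wordProd ω = w) : ∃ ω', List.Sublist ω' ω ∧ cs.wordProd ω' = u := by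
  induction h using Relation.ReflTransGen.head_induction_on with
  | refl => exact ⟨ω, List.Sublist.refl _, hω⟩
  | @head x y h1 _ ih =>
    obtain ⟨ω', hs, hp⟩ := ih
    obtain ⟨⟨t, ht, hy⟩, hl⟩ := h1
    have hx : y * t = x := by rw [hy, mul_assoc, ht.mul_self, mul_one]
    obtain ⟨k, _, he⟩ := strong_exchange cs ω' t ht (by rw [hp, hx]; exact hl)
    exact ⟨ω'.eraseIdx k, (List.eraseIdx_sublist _ _).trans hs, by rw [← he, hp, hx]⟩

theorem bruhat_iff (cs : CoxeterSystem M W) (u w : W) : BruhatLE cs u w ↔ ble cs u w := by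
  constructor
  · intro h
    obtain ⟨ω, hr, hω⟩ := cs.exists_isReduced w
    obtain ⟨ω', hs, _, rfl⟩ := h ω hr hω.symm
    rw [hω]
    exact ble_of_sublist hs hr
  · intro h ω hr hω
    obtain ⟨ω', hs, hp⟩ := exists_sublist_of_ble h ω hω
    obtain ⟨ω'', hs', hr', hp'⟩ := exists_reduced_sublist cs ω'
    exact ⟨ω'', hs'.trans hs, hr', hp'.trans hp⟩

theorem word_mem_parab (cs : CoxeterSystem M W) {L : Set B} {ω : List B} (hω : ∀ i ∈ ω, i ∈ L) :
    cs.wordProd ω ∈ parab cs L := by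
  induction ω with
  | nil => rw [cs.wordProd_nil]; exact one_mem _
  | cons i ω ih =>
    rw [cs.wordProd_cons]
    exact mul_mem (Subgroup.subset_closure ⟨i, hω i (by simp), rfl⟩)
      (ih fun j hj => hω j (by simp [hj]))

theorem simple_mem_parab (cs : CoxeterSystem M W) {L : Set B} {i : B} (hi : i ∈ L) :
    cs.simple i ∈ parab cs L := Subgroup.subset_closure ⟨i, hi, rfl⟩

theorem parab_word (cs : CoxeterSystem M W) {L : Set B} {x : W} (hx : x ∈ parab cs L) :
    ∃ ω : List B, (∀ i ∈ ω, i ∈ L) ∧ cs.IsReduced ω ∧ cs.wordProd ω = x := by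
  have h1 : ∃ ω : List B, (∀ i ∈ ω, i ∈ L) ∧ cs.wordProd ω = x := by
    unfold parab at hx
    induction hx using Subgroup.closure_induction with
    | mem x hx =>
      obtain ⟨i, hi, rfl⟩ := hx
      exact ⟨[i], by simpa using hi, by simp⟩
    | one => exact ⟨[], by simp, by simp⟩
    | mul x y _ _ hx hy =>
      obtain ⟨a, ha, rfl⟩ := hx
      obtain ⟨b, hb, rfl⟩ := hy
      refine ⟨a ++ b, ?_, cs.wordProd_append a b⟩
      intro i hi
      rcases List.mem_append.1 hi with hi | hi
      · exact ha i hi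
      · exact hb i hi
    | inv x _ hx =>
      obtain ⟨a, ha, rfl⟩ := hx
      exact ⟨a.reverse, by simpa using ha, by simp⟩
  obtain ⟨ω, hL, rfl⟩ := h1
  obtain ⟨ω', hs, hr, hp⟩ := exists_reduced_sublist cs ω
  exact ⟨ω', fun i hi => hL i (hs.subset hi), hr, hp⟩

theorem parab_descent (cs : CoxeterSystem M W) {L : Set B} {x : W} (hx : x ∈ parab cs L)
    (hne : x ≠ 1) : ∃ i ∈ L, cs.length (x * cs.simple i) + 1 = cs.length x := by
  obtain ⟨ω, hL, hr, rfl⟩ := parab_word cs hx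
  rcases List.eq_nil_or_concat ω with rfl | ⟨ω', i, rfl⟩
  · simp at hne
  · refine ⟨i, hL i (by simp), ?_⟩
    have h1 := hr.eq
    have h2 := cs.length_wordProd_le ω'
    have h4 : cs.wordProd (ω'.concat i) = cs.wordProd ω' * cs.simple i := cs.wordProd_concat i ω'
    rw [h4] at h1 ⊢
    rw [List.length_concat] at h1
    rw [cs.simple_mul_simple_cancel_right]
    have h3 := cs.length_mul_simple (cs.wordProd ω') i
    omega

theorem parab_comm (cs : CoxeterSystem M W) {L L' : Set B}
    (hc : ∀ i ∈ L, ∀ j ∈ L', Commute (cs.simple i) (cs.simple j))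
    {x y : W} (hx : x ∈ parab cs L) (hy : y ∈ parab cs L') : Commute x y := by
  obtain ⟨a, ha, _, rfl⟩ := parab_word cs hx
  obtain ⟨b, hb, _, rfl⟩ := parab_word cs hy
  clear hx hy
  unfold CoxeterSystem.wordProd
  apply Commute.list_prod_left
  intro x hx
  apply Commute.list_prod_right
  intro y hy
  obtain ⟨i, hi, rfl⟩ := List.mem_map.1 hx
  obtain ⟨j, hj, rfl⟩ := List.mem_map.1 hy
  exact hc i (ha i hi) j (hb j hj)

/-- additivity of length for minimal coset representatives -/
theorem len_add_of_min (cs : CoxeterSystem M W) {L : Set B} {v r : W}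
    (hv : ∀ r ∈ parab cs L, cs.length v ≤ cs.length (v * r)) (hr : r ∈ parab cs L) :
    cs.length (v * r) = cs.length v + cs.length r := by
  apply le_antisymm (cs.length_mul_le _ _)
  obtain ⟨a, ra, rfl⟩ := cs.exists_isReduced v
  obtain ⟨b, hb, rb, rfl⟩ := parab_word cs hr
  obtain ⟨c, hs, rc, hp⟩ := exists_reduced_sublist cs (a ++ b)
  obtain ⟨a', b', rfl, ha', hb'⟩ := List.sublist_append_iff.1 hs
  have hb'L : cs.wordProd b' ∈ parab cs L := word_mem_parab cs fun i hi => hb i (hb'.subset hi)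
  rw [cs.wordProd_append, cs.wordProd_append] at hp
  have h1 := hv (cs.wordProd b * (cs.wordProd b')⁻¹) (mul_mem hr (inv_mem hb'L))
  have h2 : cs.wordProd a * (cs.wordProd b * (cs.wordProd b')⁻¹) = cs.wordProd a' := by
    rw [← mul_assoc, ← hp]; group
  rw [h2] at h1
  have h3 := cs.length_wordProd_le a'
  have h4 := ra.eq
  have h5 : a' = a := ha'.eq_of_length_le (by omega)
  subst h5
  have h6 := mul_left_cancel hp
  have h7 := cs.length_wordProd_le b'
  have h8 := rc.eq
  rw [cs.wordProd_append, hp, List.length_append] at h8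
  rw [h6] at h7
  omega

variable {cs : CoxeterSystem M W} {I J K : Set B} {σ : W → W}

theorem sig_one (h : GoodSetup cs I J K σ) : σ 1 = 1 := by
  have := h.mulSigma 1 (one_mem _) 1 (one_mem _)
  simpa using this

theorem sig_inv (h : GoodSetup cs I J K σ) {x : W} (hx : x ∈ parab cs I) : σ x⁻¹ = (σ x)⁻¹ := by
  have := h.mulSigma x hx x⁻¹ (inv_mem hx)
  rw [mul_inv_cancel, sig_one h] at this
  exact eq_inv_of_mul_eq_one_right this.symm

theorem sig_mem (h : GoodSetup cs I J K σ) {x : W} (hx : x ∈ parab cs I) : σ x ∈ parab cs J :=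
  h.bijSigma.mapsTo hx

theorem cIJ (h : GoodSetup cs I J K σ) {x y : W} (hx : x ∈ parab cs I) (hy : y ∈ parab cs J) :
    Commute x y := parab_comm cs h.commIJ hx hy
theorem cIK (h : GoodSetup cs I J K σ) {x y : W} (hx : x ∈ parab cs I) (hy : y ∈ parab cs K) :
    Commute x y := parab_comm cs h.commIK hx hy
theorem cJK (h : GoodSetup cs I J K σ) {x y : W} (hx : x ∈ parab cs J) (hy : y ∈ parab cs K) :
    Commute x y := parab_comm cs h.commJK hx hy

theorem sig_word (h : GoodSetup cs I J K σ) (f : B → B)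
    (hf : ∀ i ∈ I, σ (cs.simple i) = cs.simple (f i)) {ω : List B} (hω : ∀ i ∈ ω, i ∈ I) :
    σ (cs.wordProd ω) = cs.wordProd (ω.map f) := by
  induction ω with
  | nil => simpa using sig_one h
  | cons i ω ih =>
    have hi : i ∈ I := hω i (by simp)
    have hω' : ∀ j ∈ ω, j ∈ I := fun j hj => hω j (by simp [hj])
    rw [List.map_cons, cs.wordProd_cons, cs.wordProd_cons,
      h.mulSigma _ (simple_mem_parab cs hi) _ (word_mem_parab cs hω'), ih hω', hf i hi]

theorem sig_star (h : GoodSetup cs I J K σ) :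
    ∃ f : B → B, ∀ i ∈ I, σ (cs.simple i) = cs.simple (f i) := by
  classical
  have : ∀ i, ∃ j, i ∈ I → σ (cs.simple i) = cs.simple j := by
    intro i
    by_cases hi : i ∈ I
    · obtain ⟨j, _, hj⟩ := h.simpleSigma i hi
      exact ⟨j, fun _ => hj⟩
    · exact ⟨i, fun hi' => absurd hi' hi⟩
  choose f hf using this
  exact ⟨f, hf⟩

theorem sig_simple_surj (h : GoodSetup cs I J K σ) {j : B} (hj : j ∈ J) :
    ∃ i ∈ I, σ (cs.simple i) = cs.simple j := by
  obtain ⟨f, hf⟩ := sig_star h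
  obtain ⟨x, hx, hxj⟩ := h.bijSigma.surjOn (simple_mem_parab cs hj)
  obtain ⟨ω, hω, _, rfl⟩ := parab_word cs hx
  rw [sig_word h f hf hω] at hxj
  obtain ⟨ω', hs, hr, hp⟩ := exists_reduced_sublist cs (ω.map f)
  have h1 := hr.eq
  rw [hp, hxj, cs.length_simple] at h1
  obtain ⟨a, rfl⟩ := List.length_eq_one_iff.1 h1.symm
  have ha : a ∈ ω.map f := hs.subset (by simp)
  obtain ⟨i, hi, rfl⟩ := List.mem_map.1 ha
  refine ⟨i, hω i hi, ?_⟩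
  rw [hf i (hω i hi), ← hxj, ← hp, cs.wordProd_singleton]

theorem sig_len (h : GoodSetup cs I J K σ) {x : W} (hx : x ∈ parab cs I) :
    cs.length (σ x) = cs.length x := by
  classical
  apply le_antisymm
  · obtain ⟨f, hf⟩ := sig_star h
    obtain ⟨ω, hω, hr, rfl⟩ := parab_word cs hx
    rw [sig_word h f hf hω, hr.eq]
    simpa using cs.length_wordProd_le (ω.map f)
  · obtain ⟨ω, hω, hr, hp⟩ := parab_word cs (sig_mem h hx)
    have key : ∀ ω : List B, (∀ j ∈ ω, j ∈ J) → ∃ ω' : List B, ω'.length = ω.length ∧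
        (∀ i ∈ ω', i ∈ I) ∧ σ (cs.wordProd ω') = cs.wordProd ω := by
      intro ω
      induction ω with
      | nil => intro _; exact ⟨[], rfl, by simp, by simpa using sig_one h⟩
      | cons j ω ih =>
        intro hω
        obtain ⟨ω', hl, hI, hp⟩ := ih fun k hk => hω k (by simp [hk])
        obtain ⟨i, hi, hij⟩ := sig_simple_surj h (hω j (by simp))
        refine ⟨i :: ω', by simp [hl], ?_, ?_⟩
        · intro k hk
          rcases List.mem_cons.1 hk with rfl | hk
          · exact hi
          · exact hI k hk
        · rw [cs.wordProd_cons, cs.wordProd_cons, h.mulSigma _ (simple_mem_parab cs hi) _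
            (word_mem_parab cs hI), hij, hp]
    obtain ⟨ω', hl, hI, hp'⟩ := key ω hω
    have : cs.wordProd ω' = x :=
      h.bijSigma.injOn (word_mem_parab cs hI) hx (hp'.trans hp)
    rw [← hp, hr.eq, ← hl, ← this]
    exact cs.length_wordProd_le ω'

theorem len3 (h : GoodSetup cs I J K σ) {p y k : W} (hp : p ∈ parab cs I) (hy : y ∈ parab cs J)
    (hk : k ∈ parab cs K) :
    cs.length (p * y * k) = cs.length p + cs.length y + cs.length k := by
  apply le_antisymm
  · have h1 := cs.length_mul_le (p * y) k
    have h2 := cs.length_mul_le p y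
    omega
  obtain ⟨a, ha, ra, rfl⟩ := parab_word cs hp
  obtain ⟨b, hb, rb, rfl⟩ := parab_word cs hy
  obtain ⟨c, hc, rc, rfl⟩ := parab_word cs hk
  obtain ⟨d, hs, rd, hd⟩ := exists_reduced_sublist cs (a ++ b ++ c)
  obtain ⟨d', c', rfl, hd', hc'⟩ := List.sublist_append_iff.1 hs
  obtain ⟨a', b', rfl, ha', hb'⟩ := List.sublist_append_iff.1 hd'
  have ma : cs.wordProd a' ∈ parab cs I := word_mem_parab cs fun i hi => ha i (ha'.subset hi)
  have mb : cs.wordProd b' ∈ parab cs J := word_mem_parab cs fun i hi => hb i (hb'.subset hi)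
  have mc : cs.wordProd c' ∈ parab cs K := word_mem_parab cs fun i hi => hc i (hc'.subset hi)
  simp only [cs.wordProd_append] at hd
  have l1 := rd.eq
  simp only [cs.wordProd_append, List.length_append, hd] at l1
  have la := cs.length_wordProd_le a'
  have lb := cs.length_wordProd_le b'
  have lc := cs.length_wordProd_le c'
  generalize cs.wordProd a = A at *
  generalize cs.wordProd b = E at *
  generalize cs.wordProd c = C at *
  generalize cs.wordProd a' = A' at *
  generalize cs.wordProd b' = E' at *
  generalize cs.wordProd c' = C' at *
  have e : (A⁻¹ * A') * (E⁻¹ * E') * (C⁻¹ * C') = 1 := by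
    have c1 : A' * E⁻¹ = E⁻¹ * A' := cIJ h ma (inv_mem hy)
    have c2 : E' * C⁻¹ = C⁻¹ * E' := cJK h mb (inv_mem hk)
    have c3 : A' * C⁻¹ = C⁻¹ * A' := cIK h ma (inv_mem hk)
    have c4 : E * C = C * E := cJK h hy hk
    have c5 : A * C = C * A := cIK h hp hk
    have c6 : A * E = E * A := cIJ h hp hy
    calc (A⁻¹ * A') * (E⁻¹ * E') * (C⁻¹ * C')
        = A⁻¹ * (A' * E⁻¹) * (E' * C⁻¹) * C' := by group
      _ = A⁻¹ * E⁻¹ * (A' * C⁻¹) * E' * C' := by rw [c1, c2]; group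
      _ = (C * (E * A))⁻¹ * (A' * E' * C') := by rw [c3]; group
      _ = (C * (E * A))⁻¹ * (A * E * C) := by rw [hd]
      _ = (C * (E * A))⁻¹ * (A * (E * C)) := by group
      _ = (C * (E * A))⁻¹ * ((A * C) * E) := by rw [c4]; group
      _ = (C * (E * A))⁻¹ * (C * (A * E)) := by rw [c5]; group
      _ = 1 := by rw [c6]; group
  obtain ⟨e1, e2, e3⟩ := h.directProd _ (mul_mem (inv_mem hp) ma) _ (mul_mem (inv_mem hy) mb) _
    (mul_mem (inv_mem hk) mc) e
  have e1 := inv_mul_eq_one.1 e1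
  have e2 := inv_mul_eq_one.1 e2
  have e3 := inv_mul_eq_one.1 e3
  rw [← e1] at la
  rw [← e2] at lb
  rw [← e3] at lc
  omega

theorem union_decomp (h : GoodSetup cs I J K σ) {r : W} (hr : r ∈ parab cs (I ∪ J ∪ K)) :
    ∃ p ∈ parab cs I, ∃ y ∈ parab cs J, ∃ k ∈ parab cs K, r = p * y * k := by
  obtain ⟨ω, hω, hred, rfl⟩ := parab_word cs hr
  clear hr hred
  induction ω with
  | nil => exact ⟨1, one_mem _, 1, one_mem _, 1, one_mem _, by simp⟩
  | cons i ω ih =>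
    obtain ⟨p, hp, y, hy, k, hk, e⟩ := ih fun j hj => hω j (by simp [hj])
    rw [cs.wordProd_cons, e]
    rcases hω i (by simp) with (hi | hi) | hi
    · exact ⟨cs.simple i * p, mul_mem (simple_mem_parab cs hi) hp, y, hy, k, hk, by group⟩
    · refine ⟨p, hp, cs.simple i * y, mul_mem (simple_mem_parab cs hi) hy, k, hk, ?_⟩
      have : p * cs.simple i = cs.simple i * p := cIJ h hp (simple_mem_parab cs hi)
      calc _ = (cs.simple i * p) * y * k := by group
        _ = _ := by rw [← this]; group
    · refine ⟨p, hp, y, hy, cs.simple i * k, mul_mem (simple_mem_parab cs hi) hk, ?_⟩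
      have c1 : p * cs.simple i = cs.simple i * p := cIK h hp (simple_mem_parab cs hi)
      have c2 : y * cs.simple i = cs.simple i * y := cJK h hy (simple_mem_parab cs hi)
      calc _ = (cs.simple i * p) * y * k := by group
        _ = p * (cs.simple i * y) * k := by rw [← c1]; group
        _ = _ := by rw [← c2]; group

theorem parab_mono {L L' : Set B} (hL : L ⊆ L') {x : W} (hx : x ∈ parab cs L) :
    x ∈ parab cs L' := Subgroup.closure_mono (Set.image_mono hL) hx

/-- `v` is a good (minimal) representative modulo the parabolic of `I ∪ J ∪ K`. -/
def GoodV (cs : CoxeterSystem M W) (I K : Set B) (σ : W → W) (v : W) : Prop :=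
  ∀ p ∈ parab cs I, ∀ q ∈ parab cs I, ∀ k ∈ parab cs K,
    cs.length (v * (p * σ q * k)) = cs.length v + cs.length p + cs.length q + cs.length k

theorem decomp (h : GoodSetup cs I J K σ) (y : W) :
    ∃ v, GoodV cs I K σ v ∧ ∃ p ∈ parab cs I, ∃ q ∈ parab cs I, ∃ k ∈ parab cs K,
      y = v * (p * σ q * k) := by
  classical
  have hex : ∃ n, ∃ r ∈ parab cs (I ∪ J ∪ K), cs.length (y * r) = n := ⟨_, 1, one_mem _, rfl⟩
  obtain ⟨r, hr, hn⟩ := Nat.find_spec hex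
  have hmin : ∀ r' ∈ parab cs (I ∪ J ∪ K), cs.length (y * r) ≤ cs.length (y * r * r') := by
    intro r' hr'
    rw [hn]
    exact Nat.find_min' hex ⟨r * r', mul_mem hr hr', by rw [mul_assoc]⟩
  refine ⟨y * r, ?_, ?_⟩
  · intro p hp q hq k hk
    rw [len_add_of_min cs hmin, len3 h hp (sig_mem h hq) hk, sig_len h hq]
    · omega
    · refine mul_mem (mul_mem (parab_mono ?_ hp) (parab_mono ?_ (sig_mem h hq))) (parab_mono ?_ hk)
      · intro i hi; exact Or.inl (Or.inl hi)
      · intro i hi; exact Or.inl (Or.inr hi)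
      · intro i hi; exact Or.inr hi
  · obtain ⟨p, hp, z, hz, k, hk, e⟩ := union_decomp h (inv_mem hr)
    obtain ⟨q, hq, rfl⟩ := h.bijSigma.surjOn hz
    exact ⟨p, hp, q, hq, k, hk, by rw [← e]; group⟩

theorem coord (h : GoodSetup cs I J K σ) {v p q k a x : W} (hq : q ∈ parab cs I)
    (hk : k ∈ parab cs K) (ha : a ∈ parab cs K) (hx : x ∈ parab cs I) :
    v * (p * σ q * k) * a * (x * σ x) = v * ((p * x) * σ (q * x) * (k * a)) := by
  have hka := mul_mem hk ha
  have c1 : x * (k * a) = (k * a) * x := cIK h hx hka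
  have c2 : σ x * (k * a) = (k * a) * σ x := cJK h (sig_mem h hx) hka
  have c3 : x * σ q = σ q * x := cIJ h hx (sig_mem h hq)
  rw [h.mulSigma q hq x hx]
  calc v * (p * σ q * k) * a * (x * σ x)
      = v * (p * σ q * ((k * a) * x) * σ x) := by group
    _ = v * (p * (σ q * x) * ((k * a) * σ x)) := by rw [← c1]; group
    _ = _ := by rw [← c2, ← c3]; group

theorem co_refl (h : GoodSetup cs I J K σ) (x : W) : inCoset cs I K σ x x :=
  ⟨1, one_mem _, 1, one_mem _, by simp [sig_one h]⟩

theorem co_trans (h : GoodSetup cs I J K σ) {x y z : W} (h1 : inCoset cs I K σ x y)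
    (h2 : inCoset cs I K σ y z) : inCoset cs I K σ x z := by
  obtain ⟨a, ha, p, hp, rfl⟩ := h1
  obtain ⟨b, hb, q, hq, rfl⟩ := h2
  refine ⟨a * b, mul_mem ha hb, p * q, mul_mem hp hq, ?_⟩
  have e1 := coord h (v := x) (p := p) (q := p) hp ha hb hq
  have e2 := coord h (v := x) (p := 1) (q := 1) (one_mem _) (one_mem _) ha hp
  have e3 := coord h (v := x) (p := 1) (q := 1) (one_mem _) (one_mem _)
    (mul_mem ha hb) (mul_mem hp hq)
  simp only [one_mul, mul_one, sig_one h] at e1 e2 e3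
  rw [e2, e1, e3]

theorem co_symm (h : GoodSetup cs I J K σ) {x y : W} (h1 : inCoset cs I K σ x y) :
    inCoset cs I K σ y x := by
  obtain ⟨a, ha, p, hp, rfl⟩ := h1
  refine ⟨a⁻¹, inv_mem ha, p⁻¹, inv_mem hp, ?_⟩
  have e2 := coord h (v := x) (p := 1) (q := 1) (one_mem _) (one_mem _) ha hp
  have e1 := coord h (v := x) (p := p) (q := p) hp ha (inv_mem ha) (inv_mem hp)
  simp only [one_mul, mul_one, sig_one h] at e2
  rw [e2, e1]
  simp [sig_one h]

theorem co_left (g : W) {x y : W} (h1 : inCoset cs I K σ x y) :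
    inCoset cs I K σ (g * x) (g * y) := by
  obtain ⟨a, ha, p, hp, rfl⟩ := h1
  exact ⟨a, ha, p, hp, by group⟩

/-- minimal length in coset -/
def isM (cs : CoxeterSystem M W) (I K : Set B) (σ : W → W) (m : W) : Prop :=
  ∀ y, inCoset cs I K σ m y → cs.length m ≤ cs.length y

theorem min_len (h : GoodSetup cs I J K σ) {v p q k z : W} (hv : GoodV cs I K σ v)
    (hp : p ∈ parab cs I) (hq : q ∈ parab cs I) (hk : k ∈ parab cs K)
    (hz : inCoset cs I K σ (v * (p * σ q * k)) z) :
    cs.length v + cs.length (p * q⁻¹) ≤ cs.length z := by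
  obtain ⟨a, ha, x, hx, rfl⟩ := hz
  rw [coord h hq hk ha hx, hv _ (mul_mem hp hx) _ (mul_mem hq hx) _ (mul_mem hk ha)]
  have h1 := cs.length_mul_le (p * x) (q * x)⁻¹
  rw [cs.length_inv] at h1
  have h2 : p * x * (q * x)⁻¹ = p * q⁻¹ := by group
  rw [h2] at h1
  omega

theorem canon_co (h : GoodSetup cs I J K σ) {v p q k : W}
    (hq : q ∈ parab cs I) (hk : k ∈ parab cs K) :
    inCoset cs I K σ (v * (p * σ q * k)) (v * (p * q⁻¹)) := by
  refine ⟨k⁻¹, inv_mem hk, q⁻¹, inv_mem hq, ?_⟩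
  rw [coord h hq hk (inv_mem hk) (inv_mem hq)]
  simp [sig_one h]

theorem goodV_one (h : GoodSetup cs I J K σ) {v p : W} (hv : GoodV cs I K σ v)
    (hp : p ∈ parab cs I) : cs.length (v * p) = cs.length v + cs.length p := by
  have := hv p hp 1 (one_mem _) 1 (one_mem _)
  simpa [sig_one h] using this

theorem canon_minReps (h : GoodSetup cs I J K σ) {v x : W} (hv : GoodV cs I K σ v)
    (hx : x ∈ parab cs I) : v * x ∈ minReps cs (J ∪ K) := by
  have h0 := goodV_one h hv hx
  intro j hj
  rw [h0]
  rcases hj with hj | hj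
  · obtain ⟨i, hi, e⟩ := sig_simple_surj h hj
    have h1 := hv x hx _ (simple_mem_parab cs hi) 1 (one_mem _)
    rw [e, mul_one, cs.length_simple, ← mul_assoc] at h1
    omega
  · have h1 := hv x hx 1 (one_mem _) _ (simple_mem_parab cs hj)
    rw [sig_one h, mul_one, cs.length_simple, ← mul_assoc] at h1
    omega

theorem no_K_desc (h : GoodSetup cs I J K σ) {v p q k : W} (hv : GoodV cs I K σ v)
    (hp : p ∈ parab cs I) (hq : q ∈ parab cs I) (hk : k ∈ parab cs K)
    (hm : ∀ i ∈ K, cs.length (v * (p * σ q * k)) < cs.length (v * (p * σ q * k) * cs.simple i)) :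
    k = 1 := by
  by_contra hne
  obtain ⟨i, hi, hl⟩ := parab_descent cs hk hne
  have h1 := hm i hi
  have e : v * (p * σ q * k) * cs.simple i = v * (p * σ q * (k * cs.simple i)) := by group
  rw [e, hv p hp q hq k hk, hv p hp q hq _ (mul_mem hk (simple_mem_parab cs hi))] at h1
  omega

theorem minReps_coord (h : GoodSetup cs I J K σ) {v p q k : W} (hv : GoodV cs I K σ v)
    (hp : p ∈ parab cs I) (hq : q ∈ parab cs I) (hk : k ∈ parab cs K)
    (hm : v * (p * σ q * k) ∈ minReps cs (J ∪ K)) : q = 1 ∧ k = 1 := by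
  have hk1 : k = 1 := no_K_desc h hv hp hq hk fun i hi => hm i (Or.inr hi)
  refine ⟨?_, hk1⟩
  subst hk1
  by_contra hne
  obtain ⟨i, hi, hl⟩ := parab_descent cs hq hne
  obtain ⟨j, hj, e⟩ := h.simpleSigma i hi
  have h1 := hm j (Or.inl hj)
  have e : v * (p * σ q * 1) * cs.simple j = v * (p * σ (q * cs.simple i) * 1) := by
    rw [h.mulSigma q hq _ (simple_mem_parab cs hi), e]; group
  rw [e, hv p hp q hq 1 hk, hv p hp _ (mul_mem hq (simple_mem_parab cs hi)) 1 hk] at h1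
  omega

theorem minReps_form (h : GoodSetup cs I J K σ) {w : W} (hw : w ∈ minReps cs (J ∪ K)) :
    ∃ v, GoodV cs I K σ v ∧ ∃ p ∈ parab cs I, w = v * p := by
  obtain ⟨v, hv, p, hp, q, hq, k, hk, rfl⟩ := decomp h w
  obtain ⟨rfl, rfl⟩ := minReps_coord h hv hp hq hk hw
  exact ⟨v, hv, p, hp, by simp [sig_one h]⟩

theorem isM_canon (h : GoodSetup cs I J K σ) {v p : W} (hv : GoodV cs I K σ v)
    (hp : p ∈ parab cs I) : isM cs I K σ (v * p) := by
  intro y hy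
  rw [goodV_one h hv hp]
  have e : v * p = v * (p * σ 1 * 1) := by simp [sig_one h]
  rw [e] at hy
  simpa using min_len h hv hp (one_mem _) (one_mem _) hy

theorem minReps_isM (h : GoodSetup cs I J K σ) {w : W} (hw : w ∈ minReps cs (J ∪ K)) :
    isM cs I K σ w := by
  obtain ⟨v, hv, p, hp, rfl⟩ := minReps_form h hw
  exact isM_canon h hv hp

theorem minReps_unique (h : GoodSetup cs I J K σ) {w w' : W} (hw : w ∈ minReps cs (J ∪ K))
    (hw' : w' ∈ minReps cs (J ∪ K)) (hc : inCoset cs I K σ w w') : w' = w := by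
  obtain ⟨v, hv, p, hp, rfl⟩ := minReps_form h hw
  obtain ⟨a, ha, x, hx, rfl⟩ := hc
  have e : v * p = v * (p * σ 1 * 1) := by simp [sig_one h]
  rw [e, coord h (one_mem _) (one_mem _) ha hx] at hw'
  obtain ⟨h1, h2⟩ := minReps_coord h hv (mul_mem hp hx) (mul_mem (one_mem _) hx)
    (mul_mem (one_mem _) ha) hw'
  rw [one_mul] at h1 h2
  subst h1 h2
  simp [sig_one h]

theorem isM_of_co (h : GoodSetup cs I J K σ) {x y : W} (hx : isM cs I K σ x)
    (hc : inCoset cs I K σ x y) (hl : cs.length y ≤ cs.length x) : isM cs I K σ y :=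
  fun z hz => hl.trans (hx z (co_trans h hc hz))

theorem isM_len (h : GoodSetup cs I J K σ) {x y : W} (hx : isM cs I K σ x) (hy : isM cs I K σ y)
    (hc : inCoset cs I K σ x y) : cs.length x = cs.length y :=
  le_antisymm (hx y hc) (hy x (co_symm h hc))

/-- every element dominates a minimal element of its coset -/
theorem exists_min (h : GoodSetup cs I J K σ) (y : W) :
    ∃ n, inCoset cs I K σ y n ∧ ble cs n y ∧ isM cs I K σ n ∧
      ((∀ i ∈ K, cs.length y < cs.length (y * cs.simple i)) →
        cs.length n % 2 = cs.length y % 2) := by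
  obtain ⟨v, hv, p, hp, q, hq, k, hk, rfl⟩ := decomp h y
  have hlen := hv p hp q hq k hk
  obtain ⟨f, hf⟩ := sig_star h
  obtain ⟨wv, rv, ev⟩ := cs.exists_isReduced v
  obtain ⟨wp, ip, rp, ep⟩ := parab_word cs hp
  obtain ⟨wq, iq, rq, eq⟩ := parab_word cs hq
  obtain ⟨wk, ik, rk, ek⟩ := parab_word cs hk
  obtain ⟨d, hs, rd, hd⟩ := exists_reduced_sublist cs (wp ++ wq.reverse)
  obtain ⟨a, b, rfl, ha, hb⟩ := List.sublist_append_iff.1 hs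
  have hb' : List.Sublist b.reverse wq := by simpa using hb.reverse
  have ia : ∀ i ∈ a, i ∈ I := fun i hi => ip i (ha.subset hi)
  have ib : ∀ i ∈ b.reverse, i ∈ I := fun i hi => iq i (hb'.subset hi)
  have ma : cs.wordProd a ∈ parab cs I := word_mem_parab cs ia
  have mb : cs.wordProd b.reverse ∈ parab cs I := word_mem_parab cs ib
  have hd' : cs.wordProd a * (cs.wordProd b.reverse)⁻¹ = p * q⁻¹ := by
    rw [cs.wordProd_append, cs.wordProd_append, cs.wordProd_reverse, ep, eq] at hd
    rw [cs.wordProd_reverse, inv_inv]; exact hd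
  have hld : a.length + b.length = cs.length (p * q⁻¹) := by
    have := rd.eq
    rw [hd, cs.wordProd_append, cs.wordProd_reverse, ep, eq, List.length_append] at this
    exact this.symm
  set p1 := cs.wordProd a with hp1
  set q1 := cs.wordProd b.reverse with hq1
  have hco : inCoset cs I K σ (v * (p * σ q * k)) (v * (p1 * σ q1 * 1)) := by
    have c1 := canon_co (p := p) h (v := v) hq hk
    have c2 := canon_co (p := p1) h (v := v) mb (one_mem (parab cs K))
    rw [hd'] at c2
    exact co_trans h c1 (co_symm h c2)
  have hl1 : cs.length p1 ≤ a.length := cs.length_wordProd_le a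
  have hl2 : cs.length q1 ≤ b.length := by
    have h0 := cs.length_wordProd_le b.reverse
    rw [List.length_reverse] at h0
    exact h0
  have hln : cs.length (v * (p1 * σ q1 * 1)) ≤ cs.length v + cs.length (p * q⁻¹) := by
    rw [hv p1 ma q1 mb 1 (one_mem _), cs.length_one]; omega
  have hln' := min_len h hv hp hq hk hco
  refine ⟨_, hco, ?_, ?_, ?_⟩
  · have e1 : v * (p * σ q * k) = cs.wordProd (wv ++ (wp ++ wq.map f ++ wk)) := by
      simp only [cs.wordProd_append]
      rw [← sig_word h f hf iq, ← ev, ep, eq, ek]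
    have e2 : v * (p1 * σ q1 * 1) = cs.wordProd (wv ++ (a ++ b.reverse.map f ++ [])) := by
      simp only [cs.wordProd_append]
      rw [← sig_word h f hf ib, ← ev, cs.wordProd_nil]
    rw [e2, e1]
    apply ble_of_sublist
    · exact (List.Sublist.refl _).append ((ha.append (hb'.map f)).append (List.nil_sublist _))
    · rw [CoxeterSystem.IsReduced, ← e1, hlen, ev, ← ep, ← eq, ← ek, rv.eq, rp.eq, rq.eq, rk.eq]
      simp only [List.length_append, List.length_map]
      omega
  · intro z hz
    exact hln.trans (min_len h hv hp hq hk (co_trans h hco hz))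
  · intro hK
    have hk1 := no_K_desc h hv hp hq hk hK
    subst hk1
    have hm := cs.length_mul_mod_two p q⁻¹
    rw [cs.length_inv] at hm
    rw [cs.length_one] at hlen
    omega

/-- transfer relation -/
def Tr (cs : CoxeterSystem M W) (I K : Set B) (σ : W → W) (w w' : W) : Prop :=
  ∀ u, ble cs u w → ∃ u', inCoset cs I K σ u u' ∧ ble cs u' w'

theorem Tr_refl (h : GoodSetup cs I J K σ) (w : W) : Tr cs I K σ w w :=
  fun u hu => ⟨u, co_refl h u, hu⟩

theorem Tr_trans (h : GoodSetup cs I J K σ) {a b c : W} (h1 : Tr cs I K σ a b)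
    (h2 : Tr cs I K σ b c) : Tr cs I K σ a c := by
  intro u hu
  obtain ⟨u1, c1, b1⟩ := h1 u hu
  obtain ⟨u2, c2, b2⟩ := h2 u1 b1
  exact ⟨u2, co_trans h c1 c2, b2⟩

theorem Tr_aux {w : W} {i j : B} (hco : ∀ u, inCoset cs I K σ u (u * cs.simple i * cs.simple j))
    (h : GoodSetup cs I J K σ)
    (hl : cs.length (w * cs.simple i) < cs.length (w * cs.simple i * cs.simple j)) :
    Tr cs I K σ w (w * cs.simple i * cs.simple j) := by
  intro u hu
  have hb := ble_mul_simple cs _ _ hl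
  rcases zr' hu i with h1 | h1
  · exact ⟨u, co_refl h u, ble_trans h1 hb⟩
  · refine ⟨_, hco u, ?_⟩
    rcases zr h1 j with h2 | h2
    · exact ble_trans h2 hb
    · exact h2

theorem Tr_path (h : GoodSetup cs I J K σ) {v : W} (hv : GoodV cs I K σ v) (ω : List B) :
    (∀ i ∈ ω, i ∈ I) → ∀ p ∈ parab cs I,
    cs.length (p * cs.wordProd ω) = cs.length p + ω.length →
    Tr cs I K σ (v * (p * σ (cs.wordProd ω)⁻¹ * 1)) (v * (p * cs.wordProd ω)) ∧
    Tr cs I K σ (v * (p * cs.wordProd ω)) (v * (p * σ (cs.wordProd ω)⁻¹ * 1)) := by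
  induction ω with
  | nil =>
    intro _ p _ _
    simp only [cs.wordProd_nil, inv_one, sig_one h, mul_one]
    exact ⟨Tr_refl h _, Tr_refl h _⟩
  | cons i ω ih =>
    intro hω p hp hlen
    have hi : i ∈ I := hω i (by simp)
    have hω' : ∀ j ∈ ω, j ∈ I := fun j hj => hω j (by simp [hj])
    have ms := simple_mem_parab cs hi
    have mω := word_mem_parab cs hω'
    have mω1 := word_mem_parab cs hω
    have mps := mul_mem hp ms
    obtain ⟨j, hj, hij⟩ := h.simpleSigma i hi
    have hassoc : p * cs.wordProd (i :: ω) = (p * cs.simple i) * cs.wordProd ω := by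
      rw [cs.wordProd_cons, mul_assoc]
    have l1 := cs.length_mul_le (p * cs.simple i) (cs.wordProd ω)
    have l2 := cs.length_wordProd_le ω
    have l3 := cs.length_mul_simple p i
    have l4 := cs.length_mul_le p (cs.wordProd (i :: ω))
    have l5 := cs.length_wordProd_le (i :: ω)
    rw [← hassoc] at l1
    simp only [List.length_cons] at hlen l5
    obtain ⟨t1, t2⟩ := ih hω' _ mps (by rw [← hassoc]; omega)
    rw [hassoc]
    have cij : cs.simple i * cs.simple j = cs.simple j * cs.simple i := h.commIJ i hi j hj
    have e1 : v * (p * cs.simple i * σ (cs.wordProd ω)⁻¹ * 1) * cs.simple i * cs.simple j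
        = v * (p * σ (cs.wordProd (i :: ω))⁻¹ * 1) := by
      have := coord h (v := v) (p := p * cs.simple i) (inv_mem mω) (one_mem _) (one_mem _) ms
      rw [hij, mul_one, ← mul_assoc] at this
      rw [this, cs.wordProd_cons]
      simp
    have e2 : v * (p * σ (cs.wordProd (i :: ω))⁻¹ * 1) * cs.simple j * cs.simple i
        = v * (p * cs.simple i * σ (cs.wordProd ω)⁻¹ * 1) := by
      rw [← e1]; simp
    have hco : ∀ u, inCoset cs I K σ u (u * cs.simple i * cs.simple j) := fun u =>
      ⟨1, one_mem _, cs.simple i, ms, by rw [hij]; group⟩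
    have hco' : ∀ u, inCoset cs I K σ u (u * cs.simple j * cs.simple i) := fun u =>
      ⟨1, one_mem _, cs.simple i, ms, by rw [hij, cij]; group⟩
    have lA := hv p hp _ (inv_mem mω1) 1 (one_mem _)
    have lB := hv _ mps _ (inv_mem mω) 1 (one_mem _)
    rw [cs.length_one, cs.length_inv] at lA lB
    have s1 : Tr cs I K σ (v * (p * cs.simple i * σ (cs.wordProd ω)⁻¹ * 1))
        (v * (p * σ (cs.wordProd (i :: ω))⁻¹ * 1)) := by
      rw [← e1]
      apply Tr_aux hco h
      rw [e1]
      have e3 : v * (p * cs.simple i * σ (cs.wordProd ω)⁻¹ * 1) * cs.simple i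
          = v * (p * σ (cs.wordProd ω)⁻¹ * 1) := by
        have : cs.simple i * σ (cs.wordProd ω)⁻¹ = σ (cs.wordProd ω)⁻¹ * cs.simple i :=
          cIJ h ms (sig_mem h (inv_mem mω))
        rw [mul_assoc p, this]
        simp [mul_assoc]
      have lC := hv p hp _ (inv_mem mω) 1 (one_mem _)
      rw [cs.length_one, cs.length_inv] at lC
      rw [e3]
      omega
    have s2 : Tr cs I K σ (v * (p * σ (cs.wordProd (i :: ω))⁻¹ * 1))
        (v * (p * cs.simple i * σ (cs.wordProd ω)⁻¹ * 1)) := by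
      rw [← e2]
      apply Tr_aux hco' h
      rw [e2]
      have e3 : v * (p * σ (cs.wordProd (i :: ω))⁻¹ * 1) * cs.simple j
          = v * (p * σ (cs.wordProd ω)⁻¹ * 1) := by
        rw [cs.wordProd_cons, mul_inv_rev, cs.inv_simple, h.mulSigma _ (inv_mem mω) _ ms, hij]
        simp [mul_assoc]
      have lC := hv p hp _ (inv_mem mω) 1 (one_mem _)
      rw [cs.length_one, cs.length_inv] at lC
      rw [e3]
      omega
    exact ⟨Tr_trans h s2 t1, Tr_trans h t2 s1⟩

theorem Tr_canon (h : GoodSetup cs I J K σ) {m : W} (hm : isM cs I K σ m) :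
    ∃ z ∈ minReps cs (J ∪ K), inCoset cs I K σ m z ∧ Tr cs I K σ m z ∧ Tr cs I K σ z m := by
  obtain ⟨v, hv, p, hp, q, hq, k, hk, rfl⟩ := decomp h m
  have hco := canon_co (p := p) h (v := v) hq hk
  have l1 := hm _ hco
  rw [hv p hp q hq k hk, goodV_one h hv (mul_mem hp (inv_mem hq))] at l1
  have l2 := cs.length_mul_le p q⁻¹
  rw [cs.length_inv] at l2
  have hk1 : k = 1 := cs.length_eq_zero_iff.1 (by omega)
  subst hk1
  rw [cs.length_one] at l1
  refine ⟨_, canon_minReps h hv (mul_mem hp (inv_mem hq)), hco, ?_⟩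
  obtain ⟨ω, hω, hr, e⟩ := parab_word cs (inv_mem hq)
  have hrl := hr.eq
  rw [e, cs.length_inv] at hrl
  have := Tr_path h hv ω hω p hp (by rw [e]; omega)
  rwa [e, inv_inv] at this

theorem Tr_min (h : GoodSetup cs I J K σ) {m m' : W} (hm : isM cs I K σ m)
    (hm' : isM cs I K σ m') (hc : inCoset cs I K σ m m') : Tr cs I K σ m m' := by
  obtain ⟨z, hz, c1, t1, _⟩ := Tr_canon h hm
  obtain ⟨z', hz', c2, _, t2⟩ := Tr_canon h hm'
  have : z' = z := minReps_unique h hz hz'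
    (co_trans h (co_symm h c1) (co_trans h hc c2))
  subst this
  exact Tr_trans h t1 t2

theorem isM_simple_mul {w : W} (hw : isM cs I K σ w) {i : B}
    (hl : cs.length (cs.simple i * w) + 1 = cs.length w) : isM cs I K σ (cs.simple i * w) := by
  intro y hy
  have h1 := hw (cs.simple i * y) (by simpa using co_left (cs.simple i) hy)
  have h2 := cs.length_simple_mul y i
  omega

theorem main_claim (h : GoodSetup cs I J K σ) (n : ℕ) : ∀ u w : W, cs.length w = n →
    isM cs I K σ u → isM cs I K σ w → ble cs u w → cs.length u + 2 ≤ cs.length w →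
    ∃ m, isM cs I K σ m ∧ ble cs m w ∧ (∃ u', inCoset cs I K σ u u' ∧ ble cs u' m) ∧
      cs.length u < cs.length m ∧ cs.length m < cs.length w := by
  induction n with
  | zero => intro u w hn _ _ _ hl; omega
  | succ n ih =>
    intro u w hn hu hw hb hl
    have hw1 : w ≠ 1 := by rintro rfl; simp at hn
    obtain ⟨i, hi⟩ := cs.exists_leftDescent_of_ne_one hw1
    have hsw := cs.isLeftDescent_iff.1 hi
    have hswM : isM cs I K σ (cs.simple i * w) := isM_simple_mul hw hsw
    have hswb : ble cs (cs.simple i * w) w := ble_simple_mul' cs w i (by omega)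
    have G : (∃ u', inCoset cs I K σ u u' ∧ ble cs u' (cs.simple i * w)) →
        ∃ m, isM cs I K σ m ∧ ble cs m w ∧ (∃ u', inCoset cs I K σ u u' ∧ ble cs u' m) ∧
        cs.length u < cs.length m ∧ cs.length m < cs.length w :=
      fun hG => ⟨_, hswM, hswb, hG, by omega, by omega⟩
    rcases cs.length_simple_mul u i with hsu | hsu
    · exact G ⟨u, co_refl h u, lift_left hb i (by omega)⟩
    have hsuM : isM cs I K σ (cs.simple i * u) := isM_simple_mul hu hsu
    have hsub : ble cs (cs.simple i * u) (cs.simple i * w) :=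
      lift_left (ble_trans (ble_simple_mul' cs u i (by omega)) hb) i (by simp; omega)
    obtain ⟨m, hmM, hmw, ⟨u1, hu1c, hu1b⟩, hl1, hl2⟩ :=
      ih _ _ (by omega) hsuM hswM hsub (by omega)
    have hsu1 : inCoset cs I K σ u (cs.simple i * u1) := by
      simpa using co_left (cs.simple i) hu1c
    by_cases hA : ∃ m', inCoset cs I K σ m m' ∧ isM cs I K σ m' ∧
        cs.length (cs.simple i * m') < cs.length m'
    · obtain ⟨m', hmc, hm'M, hm'l⟩ := hA
      obtain ⟨u2, hu2c, hu2b⟩ := Tr_min h hmM hm'M hmc u1 hu1b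
      have h1 : ble cs (cs.simple i * u2) m' := by
        rcases zl hu2b i with h1 | h1
        · exact h1
        · exact ble_trans h1 (ble_simple_mul' cs m' i hm'l)
      obtain ⟨u3, hu3c, hu3b⟩ := Tr_min h hm'M hmM (co_symm h hmc) _ h1
      refine G ⟨u3, ?_, ble_trans hu3b hmw⟩
      exact co_trans h hsu1 (co_trans h (co_left _ hu2c) hu3c)
    · have hsm : cs.length (cs.simple i * m) = cs.length m + 1 := by
        rcases cs.length_simple_mul m i with h1 | h1
        · exact h1
        · exact absurd ⟨m, co_refl h m, hmM, by omega⟩ hA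
      have hmsm : ble cs m (cs.simple i * m) := ble_simple_mul cs m i (by omega)
      have hsu1b : ble cs (cs.simple i * u1) (cs.simple i * m) := by
        rcases zl hu1b i with h1 | h1
        · exact ble_trans h1 hmsm
        · exact h1
      by_cases hsmM : isM cs I K σ (cs.simple i * m)
      · refine ⟨_, hsmM, ?_, ⟨_, hsu1, hsu1b⟩, by omega, by omega⟩
        rcases zl hmw i with h1 | h1
        · exact ble_trans h1 hswb
        · simpa using h1
      by_cases hK : ∀ k ∈ K, cs.length (cs.simple i * m) < cs.length (cs.simple i * m * cs.simple k)
      · exfalso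
        obtain ⟨y, hyc, hyb, hyM, hyp⟩ := exists_min h (cs.simple i * m)
        have hyp := hyp hK
        have hyl : cs.length y < cs.length (cs.simple i * m) := by
          by_contra hge
          exact hsmM (isM_of_co h hyM (co_symm h hyc) (by omega))
        have hsyc : inCoset cs I K σ m (cs.simple i * y) := by
          simpa using co_left (cs.simple i) hyc
        have h1 := hmM _ hsyc
        have h2 := cs.length_simple_mul y i
        exact hA ⟨_, hsyc, isM_of_co h hmM hsyc (by omega), by simp; omega⟩
      · push Not at hK
        obtain ⟨k, hk, hkl⟩ := hK
        have kco : ∀ x, inCoset cs I K σ x (x * cs.simple k) := fun x =>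
          ⟨cs.simple k, simple_mem_parab cs hk, 1, one_mem _, by simp [sig_one h]⟩
        have kup : ∀ x, isM cs I K σ x → cs.length x < cs.length (x * cs.simple k) := by
          intro x hx
          have h1 := hx _ (kco x)
          have h2 := cs.length_mul_simple x k
          omega
        have h3 := cs.length_mul_simple (cs.simple i * m) k
        have hm2 : m = cs.simple i * m * cs.simple k :=
          ble_eq (lift_right hmsm k (kup m hmM)) (by omega)
        obtain ⟨y, hyc, hyb, hyM, _⟩ := exists_min h (cs.simple i * u1)
        have h4 := lift_right (ble_trans hyb hsu1b) k (kup y hyM)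
        rw [← hm2] at h4
        exact G ⟨y, co_trans h hsu1 hyc, ble_trans h4 hmw⟩

end OrdO


theorem statement_12 (cs : CoxeterSystem M W) (I J K : Set B) (σ : W → W)
    (h : GoodSetup cs I J K σ) (w w' : W)
    (hw : w ∈ minReps cs (J ∪ K)) (hw' : w' ∈ minReps cs (J ∪ K))
    (hlt : ltO cs I K σ w' w)
    (hcov : ∀ z ∈ minReps cs (J ∪ K), ltO cs I K σ w' z → ltO cs I K σ z w → False) :
    cs.length w' + 1 = cs.length w := by
  obtain ⟨⟨u, huc, hub⟩, hne⟩ := hlt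
  rw [OrdO.bruhat_iff] at hub
  obtain ⟨n, hnc, hnb, hnM, _⟩ := OrdO.exists_min h u
  have hnw : OrdO.ble cs n w := OrdO.ble_trans hnb hub
  have hcn : inCoset cs I K σ w' n := OrdO.co_trans h huc hnc
  have hw'M := OrdO.minReps_isM h hw'
  have hwM := OrdO.minReps_isM h hw
  have hln := OrdO.isM_len h hw'M hnM hcn
  have hle := OrdO.ble_length hnw
  have hlt' : cs.length n < cs.length w := by
    by_contra hge
    have e := OrdO.ble_eq hnw (by omega)
    rw [e] at hcn
    exact hne (OrdO.minReps_unique h hw' hw hcn).symm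
  by_contra hcon
  obtain ⟨m, hmM, hmw, ⟨u', hu'c, hu'b⟩, l1, l2⟩ :=
    OrdO.main_claim h _ n w rfl hnM hwM hnw (by omega)
  obtain ⟨z, hz, hzc, t1, t2⟩ := OrdO.Tr_canon h hmM
  have hlz := OrdO.isM_len h hmM (OrdO.minReps_isM h hz) hzc
  obtain ⟨u2, c2, b2⟩ := t1 u' hu'b
  refine hcov z hz ⟨⟨u2, OrdO.co_trans h hcn (OrdO.co_trans h hu'c c2),
    (OrdO.bruhat_iff ..).2 b2⟩, ?_⟩
    ⟨⟨m, OrdO.co_symm h hzc, (OrdO.bruhat_iff ..).2 hmw⟩, ?_⟩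
  · rintro rfl; omega
  · rintro rfl; omega

end BruhatSetup
end
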